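/- arXiv:2212.06357 — 3 statements merged into one kernel-verified Lean document; each statement's English description precedes it below -/
import Mathlib

section
/- The softmax-parameterized value function is 48N²/(1−γ)³-smooth: for all parameters θ, θ' and every state s ∈ S, |V^{π_θ}(s) − V^{π_{θ'}}(s) − ⟨∇_θ V^{π_θ}(s), θ − θ'⟩| ≤ (24N²/(1−γ)³)·‖θ − θ'‖₂². -/
open Finset MeasureTheory
open scoped BigOperators Classical

noncomputable section

/-- Softmax policy with parameter `θ`. -/
def softmaxPol {S A : Type*} [Fintype A] (θ : S → A → ℝ) (s : S) (a : A) : ℝ :=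
  Real.exp (θ s a) / ∑ a' : A, Real.exp (θ s a')

/-- Global product softmax policy. -/
def gPolicy {N : ℕ} {S A : Fin N → Type*} [∀ n, Fintype (A n)]
    (θ : ∀ n, S n → A n → ℝ) (s : ∀ n, S n) (a : ∀ n, A n) : ℝ :=
  ∏ n, softmaxPol (θ n) (s n) (a n)

/-- Global product transition kernel. -/
def gKernel {N : ℕ} {S A : Fin N → Type*} (P : ∀ n, S n → A n → S n → ℝ)
    (s : ∀ n, S n) (a : ∀ n, A n) (s' : ∀ n, S n) : ℝ :=
  ∏ n, P n (s n) (a n) (s' n)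

/-- Distribution of the state at time `t` under kernel `K`, policy `p`,
initial state distribution `ρ`. -/
def stateDist {GS GA : Type*} [Fintype GS] [Fintype GA]
    (K : GS → GA → GS → ℝ) (p : GS → GA → ℝ) (ρ : GS → ℝ) : ℕ → GS → ℝ
  | 0 => ρ
  | t + 1 => fun s' => ∑ s : GS, ∑ a : GA, stateDist K p ρ t s * p s a * K s a s'

/-- Expected reward at time `t`. -/
def expReward {GS GA : Type*} [Fintype GS] [Fintype GA]
    (K : GS → GA → GS → ℝ) (p : GS → GA → ℝ) (R : GS → GA → ℝ) (ρ : GS → ℝ) (t : ℕ) : ℝ :=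
  ∑ s : GS, ∑ a : GA, stateDist K p ρ t s * p s a * R s a

/-- Expected discounted reward with initial state distribution `ρ`:
`V^p(ρ) = E[∑_t γ^t R(s(t),a(t)) | s(0) ∼ ρ]`. -/
def valueD {GS GA : Type*} [Fintype GS] [Fintype GA] (γ : ℝ)
    (K : GS → GA → GS → ℝ) (p : GS → GA → ℝ) (R : GS → GA → ℝ) (ρ : GS → ℝ) : ℝ :=
  ∑' t : ℕ, γ ^ t * expReward K p R ρ t

/-- Point mass at `s0`. -/
def diracD {GS : Type*} (s0 : GS) : GS → ℝ := fun s => if s = s0 then 1 else 0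

/-- State value function `V^p(s)`. -/
def valueV {GS GA : Type*} [Fintype GS] [Fintype GA] (γ : ℝ)
    (K : GS → GA → GS → ℝ) (p : GS → GA → ℝ) (R : GS → GA → ℝ) (s0 : GS) : ℝ :=
  valueD γ K p R (diracD s0)

/-- State-action value function `Q^p(s,a) = R(s,a) + γ E_{s' ∼ K(⬝|s,a)}[V^p(s')]`. -/
def valueQ {GS GA : Type*} [Fintype GS] [Fintype GA] (γ : ℝ)
    (K : GS → GA → GS → ℝ) (p : GS → GA → ℝ) (R : GS → GA → ℝ) (s0 : GS) (a0 : GA) : ℝ :=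
  R s0 a0 + γ * ∑ s' : GS, K s0 a0 s' * valueV γ K p R s'

/-- Discounted state occupancy measure `d_ρ^p(s)`. -/
def occup {GS GA : Type*} [Fintype GS] [Fintype GA] (γ : ℝ)
    (K : GS → GA → GS → ℝ) (p : GS → GA → ℝ) (ρ : GS → ℝ) (s : GS) : ℝ :=
  (1 - γ) * ∑' t : ℕ, γ ^ t * stateDist K p ρ t s

/-- Deterministic policy associated with an action-selection map. -/
def detPol {GS GA : Type*} (f : GS → GA) : GS → GA → ℝ :=
  fun s a => if a = f s then 1 else 0

/-- Squared Euclidean norm of a multi-agent parameter vector. -/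
def sqNorm {N : ℕ} {S A : Fin N → Type*} [∀ n, Fintype (S n)] [∀ n, Fintype (A n)]
    (ν : ∀ n, S n → A n → ℝ) : ℝ :=
  ∑ n, ∑ s, ∑ a, (ν n s a) ^ 2

/-- Euclidean norm of a multi-agent parameter vector. -/
def eucNorm {N : ℕ} {S A : Fin N → Type*} [∀ n, Fintype (S n)] [∀ n, Fintype (A n)]
    (ν : ∀ n, S n → A n → ℝ) : ℝ :=
  Real.sqrt (sqNorm ν)

end

noncomputable section

section Helpers

theorem contr_bound {G : Type*} [Fintype G] (M : G → G → ℝ)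
    (hM0 : ∀ s s', 0 ≤ M s s') (hM1 : ∀ s, ∑ s', M s s' = 1) (γ : ℝ) (hγ0 : 0 < γ) (hγ1 : γ < 1)
    (X y : G → ℝ) (ε : ℝ) (hy : ∀ s, |y s| ≤ ε)
    (hX : ∀ s, X s = y s + γ * ∑ s', M s s' * X s') (s : G) : |X s| ≤ ε / (1 - γ) := by
  obtain ⟨m, -, hm⟩ := Finset.exists_max_image (Finset.univ : Finset G) (fun s => |X s|)
    ⟨s, Finset.mem_univ s⟩
  refine (hm s (Finset.mem_univ s)).trans ?_
  have h1 : |∑ s', M m s' * X s'| ≤ |X m| := by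
    calc |∑ s', M m s' * X s'| ≤ ∑ s', |M m s' * X s'| := Finset.abs_sum_le_sum_abs _ _
      _ ≤ ∑ s', M m s' * |X m| := by
          refine Finset.sum_le_sum fun i _ => ?_
          rw [abs_mul, abs_of_nonneg (hM0 m i)]
          exact mul_le_mul_of_nonneg_left (hm i (Finset.mem_univ i)) (hM0 m i)
      _ = |X m| := by rw [← Finset.sum_mul, hM1, one_mul]
  have h2 : |X m| ≤ ε + γ * |X m| := by
    calc |X m| = |y m + γ * ∑ s', M m s' * X s'| := by rw [← hX m]
      _ ≤ |y m| + |γ * ∑ s', M m s' * X s'| := abs_add_le _ _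
      _ = |y m| + γ * |∑ s', M m s' * X s'| := by rw [abs_mul, abs_of_pos hγ0]
      _ ≤ _ := add_le_add (hy m) (mul_le_mul_of_nonneg_left h1 hγ0.le)
  rw [le_div_iff₀ (by linarith)]
  nlinarith

/-- Existence of a linear solution operator for `X = y + γ M X`. -/
theorem exists_resolvent {G : Type*} [Fintype G] (M : G → G → ℝ)
    (hM0 : ∀ s s', 0 ≤ M s s') (hM1 : ∀ s, ∑ s', M s s' = 1) (γ : ℝ) (hγ0 : 0 < γ) (hγ1 : γ < 1) :
    ∃ L : (G → ℝ) →ₗ[ℝ] (G → ℝ), ∀ y s, L y s = y s + γ * ∑ s', M s s' * L y s' := by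
  let F : (G → ℝ) →ₗ[ℝ] (G → ℝ) :=
    LinearMap.id - γ • Matrix.mulVecLin (Matrix.of M)
  have hF : ∀ x s, F x s = x s - γ * ∑ s', M s s' * x s' := by
    intro x s
    simp [F, Matrix.mulVec, dotProduct]
  have hinj : Function.Injective F := by
    rw [injective_iff_map_eq_zero]
    intro x hx
    funext s
    have := contr_bound M hM0 hM1 γ hγ0 hγ1 x (fun _ => 0) 0 (by simp) (by
      intro s
      have := hF x s
      rw [hx] at this
      simp only [Pi.zero_apply] at this
      linarith) s
    simpa using this
  let e := LinearEquiv.ofInjectiveEndo F hinj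
  refine ⟨e.symm.toLinearMap, fun y s => ?_⟩
  have h := hF (e.symm y) s
  have h2 : F (e.symm y) = y := e.apply_symm_apply y
  rw [h2] at h
  simp only [LinearEquiv.coe_coe]
  linarith

section MDP
variable {GS GA : Type*} [Fintype GS] [Fintype GA]

theorem trans_sum (K : GS → GA → GS → ℝ) (p : GS → GA → ℝ) (g : GS → ℝ) (s : GS) :
    ∑ s', (∑ a, p s a * K s a s') * g s' = ∑ a, p s a * ∑ s', K s a s' * g s' := by
  simp_rw [Finset.sum_mul, Finset.mul_sum]
  rw [Finset.sum_comm]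
  simp_rw [mul_assoc]

theorem trans_one (K : GS → GA → GS → ℝ) (p : GS → GA → ℝ)
    (hK1 : ∀ s a, ∑ s', K s a s' = 1) (hp1 : ∀ s, ∑ a, p s a = 1) (s : GS) :
    ∑ s', (∑ a, p s a * K s a s') = 1 := by
  rw [Finset.sum_comm]
  simp_rw [← Finset.mul_sum, hK1, mul_one, hp1]

theorem stateDist_eq (K : GS → GA → GS → ℝ) (p : GS → GA → ℝ) (ρ : GS → ℝ) (t : ℕ) :
    stateDist K p ρ t =
      Matrix.vecMul ρ ((Matrix.of fun s s' => ∑ a, p s a * K s a s') ^ t) := by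
  induction t with
  | zero => simp [stateDist]
  | succ t ih =>
    rw [pow_succ, ← Matrix.vecMul_vecMul, ← ih]
    funext s'
    simp only [stateDist, Matrix.vecMul, dotProduct, Matrix.of_apply, Finset.mul_sum, mul_assoc]

theorem expReward_eq (K : GS → GA → GS → ℝ) (p : GS → GA → ℝ) (R : GS → GA → ℝ) (s : GS) (t : ℕ) :
    expReward K p R (diracD s) t =
      Matrix.mulVec ((Matrix.of fun s s' => ∑ a, p s a * K s a s') ^ t)
        (fun s => ∑ a, p s a * R s a) s := by
  unfold expReward
  rw [stateDist_eq]
  simp only [Matrix.mulVec, Matrix.vecMul, dotProduct, diracD, ite_mul, one_mul, zero_mul,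
    Finset.sum_ite_eq', Finset.mem_univ, if_true, Finset.mul_sum, mul_assoc]

theorem avg_bound (p : GA → ℝ) (hp0 : ∀ a, 0 ≤ p a) (hp1 : ∑ a, p a = 1) (g : GA → ℝ) (c : ℝ)
    (hg : ∀ a, |g a| ≤ c) : |∑ a, p a * g a| ≤ c := by
  calc |∑ a, p a * g a| ≤ ∑ a, |p a * g a| := Finset.abs_sum_le_sum_abs _ _
    _ ≤ ∑ a, p a * c := by
        refine Finset.sum_le_sum fun i _ => ?_
        rw [abs_mul, abs_of_nonneg (hp0 i)]
        exact mul_le_mul_of_nonneg_left (hg i) (hp0 i)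
    _ = c := by rw [← Finset.sum_mul, hp1, one_mul]

theorem pair_bound (q : GA → ℝ) (e : ℝ) (hq : ∑ a, |q a| ≤ e) (g : GA → ℝ) (c : ℝ) (hc : 0 ≤ c)
    (hg : ∀ a, |g a| ≤ c) : |∑ a, q a * g a| ≤ e * c := by
  calc |∑ a, q a * g a| ≤ ∑ a, |q a * g a| := Finset.abs_sum_le_sum_abs _ _
    _ ≤ ∑ a, |q a| * c := by
        refine Finset.sum_le_sum fun i _ => ?_
        rw [abs_mul]
        exact mul_le_mul_of_nonneg_left (hg i) (abs_nonneg _)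
    _ = (∑ a, |q a|) * c := by rw [← Finset.sum_mul]
    _ ≤ e * c := mul_le_mul_of_nonneg_right hq hc

theorem valueV_bellman (K : GS → GA → GS → ℝ) (hK0 : ∀ s a s', 0 ≤ K s a s')
    (hK1 : ∀ s a, ∑ s', K s a s' = 1)
    (R : GS → GA → ℝ) (hR : ∀ s a, |R s a| ≤ 1) (γ : ℝ) (hγ0 : 0 < γ) (hγ1 : γ < 1)
    (p : GS → GA → ℝ) (hp0 : ∀ s a, 0 ≤ p s a) (hp1 : ∀ s, ∑ a, p s a = 1) (s : GS) :
    valueV γ K p R s = ∑ a, p s a * R s a +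
      γ * ∑ s', (∑ a, p s a * K s a s') * valueV γ K p R s' := by
  set M : Matrix GS GS ℝ := Matrix.of fun s s' => ∑ a, p s a * K s a s' with hM
  set f : GS → ℝ := fun s => ∑ a, p s a * R s a with hf
  have hV : ∀ s, valueV γ K p R s = ∑' t : ℕ, γ ^ t * (Matrix.mulVec (M ^ t) f s) := by
    intro s
    unfold valueV valueD
    simp_rw [expReward_eq]
    rfl
  have hstep : ∀ t s, Matrix.mulVec (M ^ (t + 1)) f s
      = ∑ s', M s s' * Matrix.mulVec (M ^ t) f s' := by
    intro t s
    rw [pow_succ', ← Matrix.mulVec_mulVec]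
    rfl
  have hb : ∀ t s, |Matrix.mulVec (M ^ t) f s| ≤ 1 := by
    intro t
    induction t with
    | zero => intro s; simpa using avg_bound (p s) (hp0 s) (hp1 s) (R s) 1 (hR s)
    | succ t ih =>
      intro s
      rw [hstep]
      exact avg_bound (M s) (fun s' => Finset.sum_nonneg fun a _ => mul_nonneg (hp0 s a) (hK0 s a s'))
        (trans_one K p hK1 hp1 s) _ 1 ih
  have hs : ∀ s, Summable fun t : ℕ => γ ^ t * (Matrix.mulVec (M ^ t) f s) := by
    intro s
    refine Summable.of_norm_bounded (summable_geometric_of_lt_one hγ0.le hγ1) fun t => ?_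
    rw [Real.norm_eq_abs, abs_mul, abs_of_pos (pow_pos hγ0 t)]
    exact mul_le_of_le_one_right (pow_pos hγ0 t).le (hb t s)
  rw [hV s, (hs s).tsum_eq_zero_add]
  congr 1
  · simp [hf]
  · simp_rw [hV, hstep]
    have : ∀ s', (∑ a, p s a * K s a s') * (∑' t : ℕ, γ ^ t * (Matrix.mulVec (M ^ t) f s'))
        = ∑' t : ℕ, M s s' * (γ ^ t * (Matrix.mulVec (M ^ t) f s')) := by
      intro s'; rw [tsum_mul_left]; rfl
    simp_rw [this]
    rw [← Summable.tsum_finsetSum (fun s' _ => (hs s').mul_left _), ← tsum_mul_left]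
    congr 1
    funext t
    simp_rw [Finset.mul_sum]
    refine Finset.sum_congr rfl fun i _ => ?_
    ring

/-- Perturbation theorem: a linear operator `D` (depending only on `p`) is the first order
approximation of the value function. -/
theorem value_perturb (K : GS → GA → GS → ℝ) (hK0 : ∀ s a s', 0 ≤ K s a s')
    (hK1 : ∀ s a, ∑ s', K s a s' = 1)
    (R : GS → GA → ℝ) (hR : ∀ s a, |R s a| ≤ 1) (γ : ℝ) (hγ0 : 0 < γ) (hγ1 : γ < 1)
    (p : GS → GA → ℝ) (hp0 : ∀ s a, 0 ≤ p s a) (hp1 : ∀ s, ∑ a, p s a = 1) (s : GS) :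
    ∃ D : (GS → GA → ℝ) →ₗ[ℝ] ℝ, ∀ (p' : GS → GA → ℝ) (_ : ∀ s a, 0 ≤ p' s a)
      (_ : ∀ s, ∑ a, p' s a = 1) (δ : GS → GA → ℝ) (e₁ e₂ : ℝ)
      (_ : ∀ s, ∑ a, |p' s a - p s a| ≤ e₁) (_ : ∀ s, ∑ a, |p' s a - p s a - δ s a| ≤ e₂),
      |valueV γ K p' R s - valueV γ K p R s - D δ|
        ≤ (e₂ * (1 / (1 - γ)) + γ * (e₁ * (e₁ * (1 / (1 - γ)) / (1 - γ)))) / (1 - γ) := by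
  have h1γ : 0 < 1 - γ := by linarith
  have hM0 : ∀ (p : GS → GA → ℝ), (∀ s a, 0 ≤ p s a) → ∀ s s', 0 ≤ ∑ a, p s a * K s a s' :=
    fun p hp s s' => Finset.sum_nonneg fun a _ => mul_nonneg (hp s a) (hK0 s a s')
  obtain ⟨L, hL⟩ := exists_resolvent (fun s s' => ∑ a, p s a * K s a s') (hM0 p hp0)
    (trans_one K p hK1 hp1) γ hγ0 hγ1
  set V := valueV γ K p R with hVdef
  set Q : GS → GA → ℝ := fun s a => R s a + γ * ∑ s', K s a s' * V s' with hQ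
  have hVb : ∀ s, |V s| ≤ 1 / (1 - γ) := contr_bound _ (hM0 p hp0)
    (trans_one K p hK1 hp1) γ hγ0 hγ1 V _ 1
    (fun s => avg_bound (p s) (hp0 s) (hp1 s) (R s) 1 (hR s))
    (valueV_bellman K hK0 hK1 R hR γ hγ0 hγ1 p hp0 hp1)
  have hQb : ∀ s a, |Q s a| ≤ 1 / (1 - γ) := by
    intro s a
    have := avg_bound (K s a) (hK0 s a) (hK1 s a) V _ hVb
    calc |Q s a| ≤ |R s a| + |γ * ∑ s', K s a s' * V s'| := abs_add_le _ _
      _ ≤ 1 + γ * (1 / (1 - γ)) := by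
          rw [abs_mul, abs_of_pos hγ0]
          exact add_le_add (hR s a) (mul_le_mul_of_nonneg_left this hγ0.le)
      _ = 1 / (1 - γ) := by field_simp; ring
  let Y : (GS → GA → ℝ) →ₗ[ℝ] (GS → ℝ) :=
    { toFun := fun δ s => ∑ a, δ s a * Q s a
      map_add' := by
        intro x y; funext s; simp [add_mul, Finset.sum_add_distrib]
      map_smul' := by
        intro c x; funext s; simp [mul_assoc, Finset.mul_sum] }
  have hY : ∀ δ s, Y δ s = ∑ a, δ s a * Q s a := fun _ _ => rfl
  refine ⟨(LinearMap.proj s).comp (L.comp Y), ?_⟩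
  intro p' hp0' hp1' δ e₁ e₂ he₁ he₂
  set V' := valueV γ K p' R with hV'
  have hBV : ∀ s, V s = ∑ a, p s a * Q s a := by
    intro s
    have := valueV_bellman K hK0 hK1 R hR γ hγ0 hγ1 p hp0 hp1 s
    rw [trans_sum] at this
    rw [hVdef, this, hQ, Finset.mul_sum, ← Finset.sum_add_distrib]
    refine Finset.sum_congr rfl fun a _ => ?_
    ring
  have hBV' : ∀ s, V' s = ∑ a, p' s a * (R s a + γ * ∑ s', K s a s' * V' s') := by
    intro s
    have := valueV_bellman K hK0 hK1 R hR γ hγ0 hγ1 p' hp0' hp1' s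
    rw [trans_sum] at this
    rw [hV', this, Finset.mul_sum, ← Finset.sum_add_distrib]
    refine Finset.sum_congr rfl fun a _ => ?_
    ring
  have hW : ∀ s, V' s - V s = (∑ a, (p' s a - p s a) * Q s a) +
      γ * ∑ s', (∑ a, p' s a * K s a s') * (V' s' - V s') := by
    intro s
    rw [trans_sum, hBV', hBV, Finset.mul_sum, ← Finset.sum_add_distrib, ← Finset.sum_sub_distrib]
    refine Finset.sum_congr rfl fun a _ => ?_
    simp only [hQ, mul_sub, Finset.sum_sub_distrib]
    ring
  have hpos : 0 ≤ 1 / (1 - γ) := by positivity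
  have hWb := contr_bound _ (hM0 p' hp0') (trans_one K p' hK1 hp1') γ hγ0 hγ1
    (fun s => V' s - V s) _ (e₁ * (1 / (1 - γ)))
    (fun s => pair_bound _ e₁ (he₁ s) (Q s) _ hpos (hQb s)) hW
  have he₁0 : 0 ≤ e₁ := (Finset.sum_nonneg fun a _ => abs_nonneg _).trans (he₁ s)
  refine contr_bound _ (hM0 p hp0) (trans_one K p hK1 hp1) γ hγ0 hγ1
    (fun s => V' s - V s - L (Y δ) s)
    (fun s => (∑ a, (p' s a - p s a - δ s a) * Q s a) +
      γ * ∑ a, (p' s a - p s a) * ∑ s', K s a s' * (V' s' - V s')) _ ?_ ?_ s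
  · intro s
    refine (abs_add_le _ _).trans (add_le_add (pair_bound _ e₂ (he₂ s) (Q s) _ hpos (hQb s)) ?_)
    rw [abs_mul, abs_of_pos hγ0]
    refine mul_le_mul_of_nonneg_left ?_ hγ0.le
    refine pair_bound _ e₁ (he₁ s) _ _ (by positivity) fun a => ?_
    exact avg_bound (K s a) (hK0 s a) (hK1 s a) _ _ hWb
  · intro s
    have h1 := hW s
    have h2 := hL (Y δ) s
    simp only [mul_sub _ (V' _ - V _) _, Finset.sum_sub_distrib]
    rw [hY] at h2
    simp only [trans_sum] at h1 h2 ⊢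
    rw [h1, h2]
    simp only [sub_mul, Finset.sum_sub_distrib]
    ring

end MDP

/-- Change of a finite distribution under exponential tilting, first order. -/
theorem tilt_bounds {G : Type*} [Fintype G] (p : G → ℝ) (hp0 : ∀ a, 0 ≤ p a)
    (hp1 : ∑ a, p a = 1) (w : G → ℝ) (B : ℝ) (hw : ∀ a, |w a| ≤ B) (p' : G → ℝ)
    (hp' : ∀ a, p' a = p a * Real.exp (w a) / ∑ b, p b * Real.exp (w b)) :
    ∑ a, |p' a - p a| ≤ 4 * B ∧
    ∑ a, |p' a - p a - p a * (w a - ∑ b, p b * w b)| ≤ 12 * B ^ 2 := by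
  set m := ∑ b, p b * Real.exp (w b) with hm
  set μ := ∑ b, p b * w b with hμ
  have hμB : |μ| ≤ B := avg_bound p hp0 hp1 w B hw
  have hμ' := abs_le.1 hμB
  have hw' := fun a => abs_le.1 (hw a)
  have hB0 : 0 ≤ B := (abs_nonneg _).trans hμB
  have hmpos : 0 < m := by
    have : Real.exp (-B) ≤ m := by
      calc Real.exp (-B) = ∑ b, p b * Real.exp (-B) := by rw [← Finset.sum_mul, hp1, one_mul]
        _ ≤ m := Finset.sum_le_sum fun b _ =>
          mul_le_mul_of_nonneg_left (Real.exp_le_exp.2 (hw' b).1) (hp0 b)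
    exact (Real.exp_pos _).trans_le this
  have hmle : m ≤ Real.exp B := by
    calc m ≤ ∑ b, p b * Real.exp B := Finset.sum_le_sum fun b _ =>
          mul_le_mul_of_nonneg_left (Real.exp_le_exp.2 (hw' b).2) (hp0 b)
      _ = Real.exp B := by rw [← Finset.sum_mul, hp1, one_mul]
  have hp'1 : ∑ a, p' a = 1 := by
    simp_rw [hp']
    rw [← Finset.sum_div, div_self hmpos.ne']
  have hp'0 : ∀ a, 0 ≤ p' a := fun a => by
    rw [hp']; exact div_nonneg (mul_nonneg (hp0 a) (Real.exp_pos _).le) hmpos.le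
  have hlow : ∀ a, p a * (1 - 2 * B) ≤ p' a := by
    intro a
    rw [hp', mul_div_assoc]
    refine mul_le_mul_of_nonneg_left ?_ (hp0 a)
    calc 1 - 2 * B ≤ Real.exp (-(2 * B)) := by
          have := Real.add_one_le_exp (-(2 * B)); linarith
      _ = Real.exp (-B) / Real.exp B := by rw [← Real.exp_sub]; congr 1; ring
      _ ≤ Real.exp (w a) / m := by
          have := Real.exp_le_exp.2 (hw' a).1
          gcongr
  constructor
  · calc ∑ a, |p' a - p a| ≤ ∑ a, (p a * (4 * B) + (p' a - p a)) := by
          refine Finset.sum_le_sum fun a _ => ?_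
          have h1 := hlow a
          have h2 := mul_nonneg (hp0 a) hB0
          rw [abs_le]
          constructor <;> nlinarith
      _ = 4 * B := by
          rw [Finset.sum_add_distrib, ← Finset.sum_mul, Finset.sum_sub_distrib, hp1, hp'1]; ring
  · have hx : ∀ a, |w a - μ| ≤ 2 * B := fun a => by
      have := hw' a
      rw [abs_le]; constructor <;> linarith [this.1, this.2]
    rcases le_or_gt (2 * B) 1 with hB | hB
    · -- small tilt
      set h : G → ℝ := fun a => Real.exp (w a - μ) - 1 - (w a - μ) with hh
      have hh0 : ∀ a, 0 ≤ h a := fun a => by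
        have := Real.add_one_le_exp (w a - μ); simp only [hh]; linarith
      have hh1 : ∀ a, h a ≤ (2 * B) ^ 2 := fun a => by
        have h1 := Real.abs_exp_sub_one_sub_id_le ((hx a).trans hB)
        have h2 : (w a - μ) ^ 2 ≤ (2 * B) ^ 2 := sq_le_sq' (abs_le.1 (hx a)).1 (abs_le.1 (hx a)).2
        exact ((le_abs_self _).trans h1).trans h2
      set H := ∑ a, p a * h a with hH
      have hH0 : 0 ≤ H := Finset.sum_nonneg fun a _ => mul_nonneg (hp0 a) (hh0 a)
      have hH1 : H ≤ (2 * B) ^ 2 := (le_abs_self _).trans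
        (avg_bound p hp0 hp1 h _ fun a => by rw [abs_of_nonneg (hh0 a)]; exact hh1 a)
      have hexp : ∀ a, Real.exp (w a) = Real.exp μ * (1 + (w a - μ) + h a) := fun a => by
        have : 1 + (w a - μ) + h a = Real.exp (w a - μ) := by simp only [hh]; ring
        rw [this, ← Real.exp_add]; congr 1; ring
      have hmH : m = Real.exp μ * (1 + H) := by
        have : ∀ b, p b * Real.exp (w b)
            = Real.exp μ * (p b + (p b * w b - p b * μ) + p b * h b) := fun b => by
          rw [hexp]; ring
        rw [hm]
        simp_rw [this]
        rw [← Finset.mul_sum, Finset.sum_add_distrib, Finset.sum_add_distrib,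
          Finset.sum_sub_distrib, ← Finset.sum_mul, hp1, ← hμ, ← hH]
        ring
      have hterm : ∀ a, |p' a - p a - p a * (w a - μ)| ≤ p a * h a + p a * (2 * H) := by
        intro a
        have h1H : 0 < 1 + H := by linarith
        have e : p' a - p a - p a * (w a - μ)
            = p a * ((h a - H * (1 + (w a - μ))) / (1 + H)) := by
          rw [hp', hmH, hexp]
          have := Real.exp_pos μ
          field_simp
          ring
        rw [e, abs_mul, abs_of_nonneg (hp0 a), ← mul_add]
        refine mul_le_mul_of_nonneg_left ?_ (hp0 a)
        rw [abs_div, abs_of_pos h1H]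
        have hx1 := abs_le.1 ((hx a).trans hB)
        have : |h a - H * (1 + (w a - μ))| ≤ h a + 2 * H := by
          have := hh0 a
          rw [abs_le]; constructor <;> nlinarith
        refine (div_le_self (abs_nonneg _) (by linarith)).trans this
      calc _ ≤ ∑ a, (p a * h a + p a * (2 * H)) := Finset.sum_le_sum fun a _ => hterm a
        _ = 3 * H := by
          rw [Finset.sum_add_distrib, ← Finset.sum_mul, hp1, ← hH]; ring
        _ ≤ 12 * B ^ 2 := by nlinarith
    · calc _ ≤ ∑ a, (p' a + p a + p a * (2 * B)) := by
            refine Finset.sum_le_sum fun a _ => ?_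
            have h1 := mul_le_mul_of_nonneg_left (hx a) (hp0 a)
            have h2 := abs_le.1 (hx a)
            have h3 := hp0 a
            have h4 := hp'0 a
            rw [abs_le]; constructor <;> nlinarith
        _ = 2 + 2 * B := by
            rw [Finset.sum_add_distrib, Finset.sum_add_distrib, ← Finset.sum_mul, hp1, hp'1]; ring
        _ ≤ 12 * B ^ 2 := by nlinarith

section Policy
variable {N : ℕ} {S A : Fin N → Type*} [∀ n, Fintype (A n)] [∀ n, Nonempty (A n)]

theorem softmax_pos {S A : Type*} [Fintype A] [Nonempty A] (θ : S → A → ℝ) (s : S) (a : A) :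
    0 < softmaxPol θ s a :=
  div_pos (Real.exp_pos _) (Finset.sum_pos (fun _ _ => Real.exp_pos _) Finset.univ_nonempty)

theorem softmax_sum {S A : Type*} [Fintype A] [Nonempty A] (θ : S → A → ℝ) (s : S) :
    ∑ a, softmaxPol θ s a = 1 := by
  unfold softmaxPol
  rw [← Finset.sum_div, div_self]
  exact (Finset.sum_pos (fun _ _ => Real.exp_pos _) Finset.univ_nonempty).ne'

theorem gPolicy_nonneg (θ : ∀ n, S n → A n → ℝ) (s : ∀ n, S n) (a : ∀ n, A n) :
    0 ≤ gPolicy θ s a := Finset.prod_nonneg fun n _ => (softmax_pos (θ n) (s n) (a n)).le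

theorem gPolicy_sum (θ : ∀ n, S n → A n → ℝ) (s : ∀ n, S n) :
    ∑ a, gPolicy θ s a = 1 := by
  unfold gPolicy
  rw [← Fintype.piFinset_univ, ← Finset.prod_univ_sum]
  simp [softmax_sum]

theorem gPolicy_tilt (θ u : ∀ n, S n → A n → ℝ) (s : ∀ n, S n) (a : ∀ n, A n) :
    gPolicy (θ + u) s a = gPolicy θ s a * Real.exp (∑ n, u n (s n) (a n)) /
      ∑ b, gPolicy θ s b * Real.exp (∑ n, u n (s n) (b n)) := by
  have h1 : ∀ b : ∀ n, A n, gPolicy θ s b * Real.exp (∑ n, u n (s n) (b n))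
      = ∏ n, (softmaxPol (θ n) (s n) (b n) * Real.exp (u n (s n) (b n))) := by
    intro b
    rw [Real.exp_sum, gPolicy, Finset.prod_mul_distrib]
  simp_rw [h1]
  rw [← Fintype.piFinset_univ, ← Finset.prod_univ_sum (fun _ => Finset.univ)
    (fun n x => softmaxPol (θ n) (s n) x * Real.exp (u n (s n) x)),
    ← Finset.prod_div_distrib, gPolicy]
  refine Finset.prod_congr rfl fun n _ => ?_
  unfold softmaxPol
  have hZ : (0:ℝ) < ∑ a', Real.exp (θ n (s n) a') :=
    Finset.sum_pos (fun _ _ => Real.exp_pos _) Finset.univ_nonempty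
  simp_rw [div_mul_eq_mul_div, ← Real.exp_add]
  rw [← Finset.sum_div, div_div_div_cancel_right₀ hZ.ne']
  rfl

/-- Directional derivative of the global policy. -/
def dPol (θ : ∀ n, S n → A n → ℝ) :
    (∀ n, S n → A n → ℝ) →ₗ[ℝ] ((∀ n, S n) → (∀ n, A n) → ℝ) where
  toFun u s a := gPolicy θ s a * (∑ n, u n (s n) (a n) -
    ∑ b, gPolicy θ s b * ∑ n, u n (s n) (b n))
  map_add' x y := by
    funext s a
    simp only [Pi.add_apply, Finset.sum_add_distrib, mul_add]
    ring
  map_smul' c x := by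
    funext s a
    simp only [Pi.smul_apply, smul_eq_mul, ← Finset.mul_sum, RingHom.id_apply]
    have : ∀ b, gPolicy θ s b * (c * ∑ n, x n (s n) (b n))
      = c * (gPolicy θ s b * ∑ n, x n (s n) (b n)) := fun b => by ring
    simp_rw [this]
    rw [← Finset.mul_sum]
    ring

end Policy

theorem abs_le_eucNorm {N : ℕ} {S A : Fin N → Type*} [∀ n, Fintype (S n)] [∀ n, Fintype (A n)]
    (u : ∀ n, S n → A n → ℝ) (n : Fin N) (s : S n) (a : A n) : |u n s a| ≤ eucNorm u := by
  unfold eucNorm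
  refine Real.abs_le_sqrt ?_
  unfold sqNorm
  calc u n s a ^ 2 ≤ ∑ a, u n s a ^ 2 :=
        Finset.single_le_sum (f := fun a => u n s a ^ 2) (fun _ _ => sq_nonneg _) (Finset.mem_univ a)
    _ ≤ ∑ s, ∑ a, u n s a ^ 2 :=
        Finset.single_le_sum (f := fun s => ∑ a, u n s a ^ 2)
          (fun _ _ => Finset.sum_nonneg fun _ _ => sq_nonneg _) (Finset.mem_univ s)
    _ ≤ _ :=
        Finset.single_le_sum (f := fun n => ∑ s, ∑ a, u n s a ^ 2)
          (fun _ _ => Finset.sum_nonneg fun _ _ => Finset.sum_nonneg fun _ _ => sq_nonneg _)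
          (Finset.mem_univ n)

end Helpers

end

/-- Smoothness of the softmax-parameterized value function: for all
parameters `θ, θ'` and every global state `s`,
`|V^{π_θ}(s) − V^{π_{θ'}}(s) − ⟨∇_θ V^{π_θ}(s), θ − θ'⟩| ≤ (24N²/(1−γ)³)‖θ − θ'‖₂²`. -/
theorem value_function_smoothness
    {N : ℕ} (hN : 1 ≤ N)
    {S A : Fin N → Type*}
    [∀ n, Fintype (S n)] [∀ n, Nonempty (S n)]
    [∀ n, Fintype (A n)] [∀ n, Nonempty (A n)]
    (Nbr : Fin N → Finset (Fin N)) (hNbr : ∀ n, n ∈ Nbr n)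
    (r : Fin N → (∀ k, S k) → (∀ k, A k) → ℝ)
    (hr0 : ∀ n s a, 0 ≤ r n s a) (hr1 : ∀ n s a, r n s a ≤ 1)
    (hrloc : ∀ n (s s' : ∀ k, S k) (a a' : ∀ k, A k),
      (∀ k ∈ Nbr n, s k = s' k) → (∀ k ∈ Nbr n, a k = a' k) → r n s a = r n s' a')
    (P : ∀ n, S n → A n → S n → ℝ)
    (hP0 : ∀ n sn an s'n, 0 ≤ P n sn an s'n)
    (hP1 : ∀ n sn an, ∑ s'n, P n sn an s'n = 1)
    (γ : ℝ) (hγ0 : 0 < γ) (hγ1 : γ < 1)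
    (Rg : (∀ k, S k) → (∀ k, A k) → ℝ)
    (hRg : Rg = fun s a => (N : ℝ)⁻¹ * ∑ m, r m s a)
    (θ θ' : ∀ n, S n → A n → ℝ) (s : ∀ k, S k) :
    DifferentiableAt ℝ
      (fun ϑ : ∀ n, S n → A n → ℝ => valueV γ (gKernel P) (gPolicy ϑ) Rg s) θ ∧
    |valueV γ (gKernel P) (gPolicy θ) Rg s - valueV γ (gKernel P) (gPolicy θ') Rg s -
        fderiv ℝ (fun ϑ : ∀ n, S n → A n → ℝ => valueV γ (gKernel P) (gPolicy ϑ) Rg s) θ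
          (θ - θ')|
      ≤ (24 * (N : ℝ) ^ 2 / (1 - γ) ^ 3) * (eucNorm (θ - θ')) ^ 2 := by
  classical
  have h1γ : 0 < 1 - γ := by linarith
  have hNpos : (0:ℝ) < N := by exact_mod_cast hN
  have hR : ∀ s a, |Rg s a| ≤ 1 := by
    intro s a
    rw [hRg]
    have h0 : 0 ≤ ∑ m, r m s a := Finset.sum_nonneg fun m _ => hr0 m s a
    have h1 : ∑ m, r m s a ≤ N := by
      calc ∑ m, r m s a ≤ ∑ _m : Fin N, (1:ℝ) := Finset.sum_le_sum fun m _ => hr1 m s a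
        _ = N := by simp
    simp only
    rw [abs_of_nonneg (by positivity), inv_mul_le_iff₀ hNpos, mul_one]
    exact h1
  have hK0 : ∀ s a s', 0 ≤ gKernel P s a s' := fun s a s' =>
    Finset.prod_nonneg fun n _ => hP0 n _ _ _
  have hK1 : ∀ s a, ∑ s', gKernel P s a s' = 1 := by
    intro s a
    unfold gKernel
    rw [← Fintype.piFinset_univ,
      ← Finset.prod_univ_sum (fun _ => Finset.univ) (fun n x => P n (s n) (a n) x)]
    simp [hP1]
  obtain ⟨D, hD⟩ := value_perturb (gKernel P) hK0 hK1 Rg hR γ hγ0 hγ1 (gPolicy θ)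
    (gPolicy_nonneg θ) (gPolicy_sum θ) s
  have key : ∀ (u : ∀ n, S n → A n → ℝ) (b : ℝ), (∀ n s a, |u n s a| ≤ b) →
      |valueV γ (gKernel P) (gPolicy (θ + u)) Rg s - valueV γ (gKernel P) (gPolicy θ) Rg s
        - D (dPol θ u)| ≤ (24 * (N : ℝ) ^ 2 / (1 - γ) ^ 3) * b ^ 2 := by
    intro u b hu
    have hw : ∀ (s : ∀ n, S n) (a : ∀ n, A n), |∑ n, u n (s n) (a n)| ≤ N * b := by
      intro s a
      calc _ ≤ ∑ n, |u n (s n) (a n)| := Finset.abs_sum_le_sum_abs _ _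
        _ ≤ ∑ _n : Fin N, b := Finset.sum_le_sum fun n _ => hu n _ _
        _ = N * b := by simp
    have ht := fun s => tilt_bounds (gPolicy θ s) (gPolicy_nonneg θ s) (gPolicy_sum θ s)
      (fun a => ∑ n, u n (s n) (a n)) (N * b) (hw s) (gPolicy (θ + u) s)
      (fun a => gPolicy_tilt θ u s a)
    refine (hD (gPolicy (θ + u)) (gPolicy_nonneg _) (gPolicy_sum _) (dPol θ u) _ _
      (fun s => (ht s).1) (fun s => (ht s).2)).trans ?_
    have e : (12 * (N * b) ^ 2 * (1 / (1 - γ)) +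
        γ * (4 * (N * b) * (4 * (N * b) * (1 / (1 - γ)) / (1 - γ)))) / (1 - γ)
        = ((12 * (1 - γ) + 16 * γ) * (N : ℝ) ^ 2 / (1 - γ) ^ 3) * b ^ 2 := by
      field_simp
      ring
    rw [e]
    have : 12 * (1 - γ) + 16 * γ ≤ 24 := by linarith
    gcongr
  let F : (∀ n, S n → A n → ℝ) →L[ℝ] ℝ := (D.comp (dPol θ)).toContinuousLinearMap
  have hF : ∀ u, F u = D (dPol θ u) := fun u => rfl
  have hder : HasFDerivAt
      (fun ϑ : ∀ n, S n → A n → ℝ => valueV γ (gKernel P) (gPolicy ϑ) Rg s) F θ := by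
    rw [hasFDerivAt_iff_isLittleO_nhds_zero]
    refine Asymptotics.IsBigO.trans_isLittleO (g := fun u => ‖u‖ ^ 2)
      (Asymptotics.IsBigO.of_bound (24 * (N : ℝ) ^ 2 / (1 - γ) ^ 3)
        (Filter.Eventually.of_forall fun u => ?_))
      (Asymptotics.isLittleO_norm_pow_id one_lt_two)
    rw [Real.norm_eq_abs, Real.norm_eq_abs, abs_of_nonneg (sq_nonneg ‖u‖), hF]
    refine key u ‖u‖ fun n s a => ?_
    exact ((norm_le_pi_norm (u n s) a).trans (norm_le_pi_norm (u n) s)).trans (norm_le_pi_norm u n)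
  refine ⟨hder.differentiableAt, ?_⟩
  rw [hder.fderiv]
  have hk := key (θ' - θ) (eucNorm (θ - θ')) (fun n s a => by
    have := abs_le_eucNorm (θ - θ') n s a
    rw [show (θ' - θ) n s a = -((θ - θ') n s a) by simp, abs_neg]
    exact this)
  rw [add_sub_cancel, ← hF] at hk
  rw [← neg_sub θ' θ, map_neg, ← abs_neg]
  rw [neg_sub θ' θ]
  refine le_trans (le_of_eq ?_) hk
  congr 1
  ring
end

section
/- Non-uniform Łojasiewicz inequality: for the tabular softmax policy π_θ(a|s) = exp(θ(s,a))/Σ_{a'} exp(θ(s,a')) on a finite γ-discounted MDP with rewards in [0,1], for any fully supported distributions μ and ρ on S, ‖∇_θ V^{π_θ}(μ)‖₂ ≥ (min_{s∈S} π_θ(a*(s)|s))·‖d_ρ^{π*}/d_μ^{π_θ}‖_∞^{-1}·(V*(ρ) − V^{π_θ}(ρ))/√|S|, where ‖d_ρ^{π*}/d_μ^{π_θ}‖_∞ = max_{s∈S} d_ρ^{π*}(s)/d_μ^{π_θ}(s). -/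
open Finset MeasureTheory
open scoped BigOperators Classical

noncomputable section Aux

variable {S A : Type*} [Fintype S] [Fintype A]

lemma aux_sd_nonneg (P : S → A → S → ℝ) (hP0 : ∀ s a s', 0 ≤ P s a s')
    (p : S → A → ℝ) (hp0 : ∀ s a, 0 ≤ p s a) (μ : S → ℝ) (hμ0 : ∀ s, 0 ≤ μ s) (t : ℕ) :
    ∀ s, 0 ≤ stateDist P p μ t s := by
  induction t with
  | zero => exact hμ0
  | succ t ih =>
    intro s
    simp only [stateDist]
    exact Finset.sum_nonneg fun x _ => Finset.sum_nonneg fun a _ =>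
      mul_nonneg (mul_nonneg (ih x) (hp0 x a)) (hP0 x a s)

lemma aux_sd_sum (P : S → A → S → ℝ) (hP1 : ∀ s a, ∑ s', P s a s' = 1)
    (p : S → A → ℝ) (hp1 : ∀ s, ∑ a, p s a = 1) (μ : S → ℝ) (t : ℕ) :
    ∑ s, stateDist P p μ t s = ∑ s, μ s := by
  induction t with
  | zero => rfl
  | succ t ih =>
    rw [← ih]
    simp only [stateDist]
    rw [Finset.sum_comm]
    refine Finset.sum_congr rfl fun x _ => ?_
    rw [Finset.sum_comm]
    simp_rw [← Finset.mul_sum, hP1, mul_one]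
    rw [← Finset.mul_sum, hp1, mul_one]

/-- One transition step of a state distribution. -/
def auxStep (P : S → A → S → ℝ) (p : S → A → ℝ) (μ : S → ℝ) : S → ℝ :=
  fun s' => ∑ s, ∑ a, μ s * p s a * P s a s'

lemma aux_sd_shift (P : S → A → S → ℝ) (p : S → A → ℝ) (μ : S → ℝ) (t : ℕ) :
    stateDist P p μ (t + 1) = stateDist P p (auxStep P p μ) t := by
  induction t with
  | zero => rfl
  | succ t ih =>
    rw [stateDist, ih]
    rfl

lemma aux_sd_lin (P : S → A → S → ℝ) (p : S → A → ℝ) (μ : S → ℝ) (t : ℕ) :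
    ∀ s, stateDist P p μ t s = ∑ x, μ x * stateDist P p (diracD x) t s := by
  induction t with
  | zero => intro s; simp [stateDist, diracD]
  | succ t ih =>
    intro s
    simp only [stateDist]
    simp_rw [ih, Finset.sum_mul, Finset.mul_sum]
    have : ∀ y : S, (∑ a, ∑ x, μ x * stateDist P p (diracD x) t y * p y a * P y a s)
        = ∑ x, ∑ a, μ x * stateDist P p (diracD x) t y * p y a * P y a s :=
      fun y => Finset.sum_comm
    simp_rw [this]
    rw [Finset.sum_comm]
    refine Finset.sum_congr rfl fun x _ => Finset.sum_congr rfl fun y _ =>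
      Finset.sum_congr rfl fun a _ => by ring

/-- Unnormalized occupancy. -/
def auxD (γ : ℝ) (P : S → A → S → ℝ) (p : S → A → ℝ) (μ : S → ℝ) (s : S) : ℝ :=
  ∑' t : ℕ, γ ^ t * stateDist P p μ t s

lemma aux_summable (P : S → A → S → ℝ) (hP0 : ∀ s a s', 0 ≤ P s a s')
    (hP1 : ∀ s a, ∑ s', P s a s' = 1) (γ : ℝ) (hγ0 : 0 < γ) (hγ1 : γ < 1)
    (p : S → A → ℝ) (hp0 : ∀ s a, 0 ≤ p s a) (hp1 : ∀ s, ∑ a, p s a = 1)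
    (μ : S → ℝ) (hμ0 : ∀ s, 0 ≤ μ s) (s : S) :
    Summable fun t : ℕ => γ ^ t * stateDist P p μ t s := by
  refine Summable.of_nonneg_of_le
    (fun t => mul_nonneg (pow_nonneg hγ0.le t) (aux_sd_nonneg P hP0 p hp0 μ hμ0 t s))
    (fun t => mul_le_mul_of_nonneg_left ?_ (pow_nonneg hγ0.le t))
    ((summable_geometric_of_lt_one hγ0.le hγ1).mul_right (∑ s, μ s))
  rw [← aux_sd_sum P hP1 p hp1 μ t]
  exact Finset.single_le_sum (f := fun s => stateDist P p μ t s)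
    (fun x _ => aux_sd_nonneg P hP0 p hp0 μ hμ0 t x) (Finset.mem_univ s)

lemma aux_D_flow (P : S → A → S → ℝ) (hP0 : ∀ s a s', 0 ≤ P s a s')
    (hP1 : ∀ s a, ∑ s', P s a s' = 1) (γ : ℝ) (hγ0 : 0 < γ) (hγ1 : γ < 1)
    (p : S → A → ℝ) (hp0 : ∀ s a, 0 ≤ p s a) (hp1 : ∀ s, ∑ a, p s a = 1)
    (μ : S → ℝ) (hμ0 : ∀ s, 0 ≤ μ s) (s' : S) :
    auxD γ P p μ s' = μ s' + γ * ∑ s, ∑ a, auxD γ P p μ s * p s a * P s a s' := by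
  have hs := aux_summable P hP0 hP1 γ hγ0 hγ1 p hp0 hp1 μ hμ0
  have h1 := (hs s').hasSum
  have h2 : HasSum (fun t : ℕ => γ * ∑ s, ∑ a, (γ ^ t * stateDist P p μ t s) * p s a * P s a s')
      (γ * ∑ s, ∑ a, auxD γ P p μ s * p s a * P s a s') :=
    (hasSum_sum fun x _ => hasSum_sum fun a _ =>
      (((hs x).hasSum.mul_right (p x a)).mul_right (P x a s'))).mul_left γ
  have h3 : (fun t : ℕ => γ * ∑ s, ∑ a, (γ ^ t * stateDist P p μ t s) * p s a * P s a s')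
      = fun t => γ ^ (t + 1) * stateDist P p μ (t + 1) s' := by
    funext t
    simp only [stateDist, Finset.mul_sum]
    refine Finset.sum_congr rfl fun y _ => Finset.sum_congr rfl fun a _ => by ring
  rw [h3] at h2
  have := (hs s').tsum_eq_zero_add
  rw [h2.tsum_eq] at this
  simpa [auxD, stateDist] using this

lemma aux_value (P : S → A → S → ℝ) (hP0 : ∀ s a s', 0 ≤ P s a s')
    (hP1 : ∀ s a, ∑ s', P s a s' = 1) (γ : ℝ) (hγ0 : 0 < γ) (hγ1 : γ < 1)
    (p : S → A → ℝ) (hp0 : ∀ s a, 0 ≤ p s a) (hp1 : ∀ s, ∑ a, p s a = 1)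
    (r : S → A → ℝ) (μ : S → ℝ) (hμ0 : ∀ s, 0 ≤ μ s) :
    valueD γ P p r μ = ∑ s, ∑ a, auxD γ P p μ s * p s a * r s a := by
  have hs := aux_summable P hP0 hP1 γ hγ0 hγ1 p hp0 hp1 μ hμ0
  have h2 : HasSum (fun t : ℕ => ∑ s, ∑ a, (γ ^ t * stateDist P p μ t s) * p s a * r s a)
      (∑ s, ∑ a, auxD γ P p μ s * p s a * r s a) :=
    hasSum_sum fun x _ => hasSum_sum fun a _ =>
      ((hs x).hasSum.mul_right (p x a)).mul_right (r x a)
  rw [← h2.tsum_eq, valueD]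
  refine tsum_congr fun t => ?_
  simp only [expReward, Finset.mul_sum]
  refine Finset.sum_congr rfl fun y _ => Finset.sum_congr rfl fun a _ => by ring

lemma aux_dirac_nonneg (x : S) : ∀ s, 0 ≤ diracD x s := by
  intro s; unfold diracD; split_ifs <;> norm_num

lemma aux_D_nonneg (P : S → A → S → ℝ) (hP0 : ∀ s a s', 0 ≤ P s a s') (γ : ℝ) (hγ0 : 0 < γ)
    (p : S → A → ℝ) (hp0 : ∀ s a, 0 ≤ p s a) (μ : S → ℝ) (hμ0 : ∀ s, 0 ≤ μ s) (s : S) :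
    0 ≤ auxD γ P p μ s :=
  tsum_nonneg fun t => mul_nonneg (pow_nonneg hγ0.le t) (aux_sd_nonneg P hP0 p hp0 μ hμ0 t s)

lemma aux_D_ge (P : S → A → S → ℝ) (hP0 : ∀ s a s', 0 ≤ P s a s')
    (hP1 : ∀ s a, ∑ s', P s a s' = 1) (γ : ℝ) (hγ0 : 0 < γ) (hγ1 : γ < 1)
    (p : S → A → ℝ) (hp0 : ∀ s a, 0 ≤ p s a) (hp1 : ∀ s, ∑ a, p s a = 1)
    (μ : S → ℝ) (hμ0 : ∀ s, 0 ≤ μ s) (s' : S) : μ s' ≤ auxD γ P p μ s' := by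
  rw [aux_D_flow P hP0 hP1 γ hγ0 hγ1 p hp0 hp1 μ hμ0 s']
  have : 0 ≤ ∑ s, ∑ a, auxD γ P p μ s * p s a * P s a s' :=
    Finset.sum_nonneg fun x _ => Finset.sum_nonneg fun a _ =>
      mul_nonneg (mul_nonneg (aux_D_nonneg P hP0 γ hγ0 p hp0 μ hμ0 x) (hp0 x a)) (hP0 x a s')
  nlinarith

lemma aux_D_sum (P : S → A → S → ℝ) (hP0 : ∀ s a s', 0 ≤ P s a s')
    (hP1 : ∀ s a, ∑ s', P s a s' = 1) (γ : ℝ) (hγ0 : 0 < γ) (hγ1 : γ < 1)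
    (p : S → A → ℝ) (hp0 : ∀ s a, 0 ≤ p s a) (hp1 : ∀ s, ∑ a, p s a = 1)
    (μ : S → ℝ) (hμ0 : ∀ s, 0 ≤ μ s) :
    ∑ s, auxD γ P p μ s = (1 - γ)⁻¹ * ∑ s, μ s := by
  have hs := aux_summable P hP0 hP1 γ hγ0 hγ1 p hp0 hp1 μ hμ0
  have h := hasSum_sum (s := Finset.univ) fun x _ => (hs x).hasSum
  simp_rw [← Finset.mul_sum, aux_sd_sum P hP1 p hp1 μ] at h
  exact h.unique ((hasSum_geometric_of_lt_one hγ0.le hγ1).mul_right _)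

lemma aux_value_lin (P : S → A → S → ℝ) (hP0 : ∀ s a s', 0 ≤ P s a s')
    (hP1 : ∀ s a, ∑ s', P s a s' = 1) (γ : ℝ) (hγ0 : 0 < γ) (hγ1 : γ < 1)
    (p : S → A → ℝ) (hp0 : ∀ s a, 0 ≤ p s a) (hp1 : ∀ s, ∑ a, p s a = 1)
    (r : S → A → ℝ) (μ : S → ℝ) (hμ0 : ∀ s, 0 ≤ μ s) :
    valueD γ P p r μ = ∑ x, μ x * valueV γ P p r x := by
  have hD : ∀ s, auxD γ P p μ s = ∑ x, μ x * auxD γ P p (diracD x) s := by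
    intro s
    have h2 : HasSum (fun t : ℕ => ∑ x, μ x * (γ ^ t * stateDist P p (diracD x) t s))
        (∑ x, μ x * auxD γ P p (diracD x) s) :=
      hasSum_sum fun x _ => (aux_summable P hP0 hP1 γ hγ0 hγ1 p hp0 hp1 (diracD x)
        (aux_dirac_nonneg x) s).hasSum.mul_left (μ x)
    rw [← h2.tsum_eq, auxD]
    refine tsum_congr fun t => ?_
    rw [aux_sd_lin, Finset.mul_sum]
    refine Finset.sum_congr rfl fun x _ => by ring
  rw [aux_value P hP0 hP1 γ hγ0 hγ1 p hp0 hp1 r μ hμ0]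
  simp only [valueV]
  simp_rw [fun x => aux_value P hP0 hP1 γ hγ0 hγ1 p hp0 hp1 r (diracD x) (aux_dirac_nonneg x),
    hD, Finset.sum_mul, Finset.mul_sum]
  have : ∀ y : S, (∑ a, ∑ x, μ x * auxD γ P p (diracD x) y * p y a * r y a)
        = ∑ x, ∑ a, μ x * auxD γ P p (diracD x) y * p y a * r y a :=
      fun y => Finset.sum_comm
  simp_rw [this]
  rw [Finset.sum_comm]
  refine Finset.sum_congr rfl fun x _ => Finset.sum_congr rfl fun y _ =>
    Finset.sum_congr rfl fun a _ => by ring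

lemma aux_bellman (P : S → A → S → ℝ) (hP0 : ∀ s a s', 0 ≤ P s a s')
    (hP1 : ∀ s a, ∑ s', P s a s' = 1) (γ : ℝ) (hγ0 : 0 < γ) (hγ1 : γ < 1)
    (p : S → A → ℝ) (hp0 : ∀ s a, 0 ≤ p s a) (hp1 : ∀ s, ∑ a, p s a = 1)
    (r : S → A → ℝ) (s : S) :
    valueV γ P p r s = ∑ a, p s a * valueQ γ P p r s a := by
  have hst : ∀ x, auxStep P p (diracD s) x = ∑ a, p s a * P s a x := by
    intro x; simp [auxStep, diracD]
  have hst0 : ∀ x, 0 ≤ auxStep P p (diracD s) x := by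
    intro x; rw [hst]
    exact Finset.sum_nonneg fun a _ => mul_nonneg (hp0 s a) (hP0 s a x)
  have hsum : ∀ ν : S → ℝ, (∀ x, 0 ≤ ν x) →
      Summable fun t : ℕ => γ ^ t * expReward P p r ν t := by
    intro ν hν
    have h2 : Summable (fun t : ℕ => ∑ s, ∑ a, (γ ^ t * stateDist P p ν t s) * p s a * r s a) :=
      summable_sum fun x _ => summable_sum fun a _ =>
        ((aux_summable P hP0 hP1 γ hγ0 hγ1 p hp0 hp1 ν hν x).mul_right (p x a)).mul_right (r x a)
    refine h2.congr fun t => ?_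
    simp only [expReward, Finset.mul_sum]
    refine Finset.sum_congr rfl fun y _ => Finset.sum_congr rfl fun a _ => by ring
  have h1 : valueV γ P p r s
      = ∑ a, p s a * r s a + γ * valueD γ P p r (auxStep P p (diracD s)) := by
    rw [valueV, valueD, (hsum _ (aux_dirac_nonneg s)).tsum_eq_zero_add, valueD, ← tsum_mul_left]
    congr 1
    · simp [expReward, stateDist, diracD]
    · refine tsum_congr fun t => ?_
      simp only [expReward, aux_sd_shift]
      ring
  rw [h1, aux_value_lin P hP0 hP1 γ hγ0 hγ1 p hp0 hp1 r _ hst0]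
  simp_rw [hst, valueQ, mul_add, Finset.sum_add_distrib, Finset.sum_mul, Finset.mul_sum]
  congr 1
  rw [Finset.sum_comm]
  refine Finset.sum_congr rfl fun x _ => Finset.sum_congr rfl fun y _ => by ring

lemma aux_perf (P : S → A → S → ℝ) (hP0 : ∀ s a s', 0 ≤ P s a s')
    (hP1 : ∀ s a, ∑ s', P s a s' = 1) (γ : ℝ) (hγ0 : 0 < γ) (hγ1 : γ < 1)
    (p : S → A → ℝ) (hp0 : ∀ s a, 0 ≤ p s a) (hp1 : ∀ s, ∑ a, p s a = 1)
    (q : S → A → ℝ) (hq0 : ∀ s a, 0 ≤ q s a) (hq1 : ∀ s, ∑ a, q s a = 1)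
    (r : S → A → ℝ) (μ : S → ℝ) (hμ0 : ∀ s, 0 ≤ μ s) :
    valueD γ P p r μ - valueD γ P q r μ
      = ∑ s, auxD γ P p μ s * ∑ a, (p s a - q s a) * valueQ γ P q r s a := by
  have e1 : ∀ s, ∑ a, (p s a - q s a) * valueQ γ P q r s a
      = ∑ a, p s a * valueQ γ P q r s a - valueV γ P q r s := by
    intro s
    rw [aux_bellman P hP0 hP1 γ hγ0 hγ1 q hq0 hq1 r s, ← Finset.sum_sub_distrib]
    exact Finset.sum_congr rfl fun a _ => by ring
  simp_rw [e1, mul_sub]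
  rw [Finset.sum_sub_distrib, aux_value_lin P hP0 hP1 γ hγ0 hγ1 q hq0 hq1 r μ hμ0,
    aux_value P hP0 hP1 γ hγ0 hγ1 p hp0 hp1 r μ hμ0]
  have e2 : ∑ s, auxD γ P p μ s * valueV γ P q r s
      = ∑ s, μ s * valueV γ P q r s
        + ∑ s', (γ * ∑ s, ∑ a, auxD γ P p μ s * p s a * P s a s') * valueV γ P q r s' := by
    rw [← Finset.sum_add_distrib]
    refine Finset.sum_congr rfl fun s _ => ?_
    rw [← add_mul, ← aux_D_flow P hP0 hP1 γ hγ0 hγ1 p hp0 hp1 μ hμ0 s]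
  have e3 : ∑ s, auxD γ P p μ s * ∑ a, p s a * valueQ γ P q r s a
      = ∑ s, ∑ a, auxD γ P p μ s * p s a * r s a
        + ∑ s', (γ * ∑ s, ∑ a, auxD γ P p μ s * p s a * P s a s') * valueV γ P q r s' := by
    simp_rw [valueQ, mul_add, Finset.sum_add_distrib, mul_add, Finset.sum_add_distrib,
      Finset.mul_sum, Finset.sum_mul]
    congr 1
    · refine Finset.sum_congr rfl fun x _ => Finset.sum_congr rfl fun y _ => by ring
    · symm
      rw [Finset.sum_comm]
      refine Finset.sum_congr rfl fun x _ => ?_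
      rw [Finset.sum_comm]
      refine Finset.sum_congr rfl fun a _ => Finset.sum_congr rfl fun y _ => by ring
  rw [e2, e3]; ring

lemma aux_V_bound (P : S → A → S → ℝ) (hP0 : ∀ s a s', 0 ≤ P s a s')
    (hP1 : ∀ s a, ∑ s', P s a s' = 1) (γ : ℝ) (hγ0 : 0 < γ) (hγ1 : γ < 1)
    (p : S → A → ℝ) (hp0 : ∀ s a, 0 ≤ p s a) (hp1 : ∀ s, ∑ a, p s a = 1)
    (r : S → A → ℝ) (hr0 : ∀ s a, 0 ≤ r s a) (hr1 : ∀ s a, r s a ≤ 1) (s : S) :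
    0 ≤ valueV γ P p r s ∧ valueV γ P p r s ≤ (1 - γ)⁻¹ := by
  have hD := aux_D_nonneg P hP0 γ hγ0 p hp0 (diracD s) (aux_dirac_nonneg s)
  rw [valueV, aux_value P hP0 hP1 γ hγ0 hγ1 p hp0 hp1 r _ (aux_dirac_nonneg s)]
  constructor
  · exact Finset.sum_nonneg fun x _ => Finset.sum_nonneg fun a _ =>
      mul_nonneg (mul_nonneg (hD x) (hp0 x a)) (hr0 x a)
  · calc _ ≤ ∑ x, ∑ a, auxD γ P p (diracD s) x * p x a :=
        Finset.sum_le_sum fun x _ => Finset.sum_le_sum fun a _ =>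
          mul_le_of_le_one_right (mul_nonneg (hD x) (hp0 x a)) (hr1 x a)
      _ = (1 - γ)⁻¹ := by
        simp_rw [← Finset.mul_sum, hp1, mul_one]
        rw [aux_D_sum P hP0 hP1 γ hγ0 hγ1 p hp0 hp1 _ (aux_dirac_nonneg s)]
        simp [diracD]

lemma aux_Q_bound (P : S → A → S → ℝ) (hP0 : ∀ s a s', 0 ≤ P s a s')
    (hP1 : ∀ s a, ∑ s', P s a s' = 1) (γ : ℝ) (hγ0 : 0 < γ) (hγ1 : γ < 1)
    (p : S → A → ℝ) (hp0 : ∀ s a, 0 ≤ p s a) (hp1 : ∀ s, ∑ a, p s a = 1)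
    (r : S → A → ℝ) (hr0 : ∀ s a, 0 ≤ r s a) (hr1 : ∀ s a, r s a ≤ 1) (s : S) (a : A) :
    |valueQ γ P p r s a| ≤ 1 + γ * (1 - γ)⁻¹ := by
  have hV := aux_V_bound P hP0 hP1 γ hγ0 hγ1 p hp0 hp1 r hr0 hr1
  have h0 : 0 ≤ ∑ s', P s a s' * valueV γ P p r s' :=
    Finset.sum_nonneg fun x _ => mul_nonneg (hP0 s a x) (hV x).1
  have h1 : ∑ s', P s a s' * valueV γ P p r s' ≤ (1 - γ)⁻¹ := by
    calc _ ≤ ∑ s', P s a s' * (1 - γ)⁻¹ :=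
          Finset.sum_le_sum fun x _ => mul_le_mul_of_nonneg_left (hV x).2 (hP0 s a x)
      _ = _ := by rw [← Finset.sum_mul, hP1, one_mul]
  have h2 := mul_le_mul_of_nonneg_left h1 hγ0.le
  have h3 := mul_nonneg hγ0.le h0
  rw [valueQ, abs_of_nonneg (add_nonneg (hr0 s a) h3)]
  linarith [hr1 s a]

lemma aux_sm_pos [Nonempty A] (θ : S → A → ℝ) (s : S) (a : A) : 0 < softmaxPol θ s a :=
  div_pos (Real.exp_pos _) (Finset.sum_pos (fun _ _ => Real.exp_pos _) Finset.univ_nonempty)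

lemma aux_sm_sum [Nonempty A] (θ : S → A → ℝ) (s : S) : ∑ a, softmaxPol θ s a = 1 := by
  unfold softmaxPol
  rw [← Finset.sum_div]
  exact div_self (Finset.sum_pos (fun _ _ => Real.exp_pos _) Finset.univ_nonempty).ne'

/-- Coordinate functional. -/
def auxProj (s : S) (a : A) : (S → A → ℝ) →L[ℝ] ℝ :=
  (ContinuousLinearMap.proj (R := ℝ) (φ := fun _ : A => ℝ) a).comp
    (ContinuousLinearMap.proj (R := ℝ) (φ := fun _ : S => A → ℝ) s)

/-- Derivative of the softmax policy. -/
def auxL (θ : S → A → ℝ) (s : S) (a : A) : (S → A → ℝ) →L[ℝ] ℝ :=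
  softmaxPol θ s a • (auxProj s a - ∑ b, softmaxPol θ s b • auxProj s b)

lemma aux_sm_deriv [Nonempty A] (θ : S → A → ℝ) (s : S) (a : A) :
    HasFDerivAt (fun θ' : S → A → ℝ => softmaxPol θ' s a) (auxL θ s a) θ := by
  have hpos : (0:ℝ) < ∑ b : A, Real.exp (θ s b) :=
    Finset.sum_pos (fun _ _ => Real.exp_pos _) Finset.univ_nonempty
  have hexp : ∀ b, HasFDerivAt (fun θ' : S → A → ℝ => Real.exp (θ' s b))
      (Real.exp (θ s b) • auxProj s b) θ := fun b =>
    HasFDerivAt.exp (f := fun θ' : S → A → ℝ => θ' s b) (auxProj s b).hasFDerivAt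
  have hsum : HasFDerivAt (fun θ' : S → A → ℝ => ∑ b : A, Real.exp (θ' s b))
      (∑ b : A, Real.exp (θ s b) • auxProj s b) θ :=
    HasFDerivAt.fun_sum fun b _ => hexp b
  have hinv : HasFDerivAt (fun θ' : S → A → ℝ => (∑ b : A, Real.exp (θ' s b))⁻¹)
      (-((∑ b : A, Real.exp (θ s b)) ^ 2)⁻¹ • ∑ b : A, Real.exp (θ s b) • auxProj s b) θ :=
    (hasDerivAt_inv hpos.ne').comp_hasFDerivAt θ hsum
  have h := (hexp a).mul hinv
  simp only [softmaxPol, div_eq_mul_inv]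
  refine h.congr_fderiv ?_
  ext v
  simp only [auxL, softmaxPol, ContinuousLinearMap.add_apply, ContinuousLinearMap.smul_apply, ContinuousLinearMap.sub_apply,
    ContinuousLinearMap.sum_apply, smul_eq_mul]
  have : ∑ b, Real.exp (θ s b) / (∑ a', Real.exp (θ s a')) * (auxProj s b) v
      = (∑ b, Real.exp (θ s b) * (auxProj s b) v) / (∑ a', Real.exp (θ s a')) := by
    rw [Finset.sum_div]; exact Finset.sum_congr rfl fun _ _ => by ring
  rw [this]
  field_simp
  ring

lemma aux_mul {E : Type*} [NormedAddCommGroup E] [NormedSpace ℝ E] (h g : E → ℝ) (L : E →L[ℝ] ℝ)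
    (x : E) (hh : HasFDerivAt h L x) (hg : ContinuousAt g x) :
    HasFDerivAt (fun y => (h y - h x) * g y) (g x • L) x := by
  have hO := hh.isBigO_sub
  have ho := hasFDerivAt_iff_isLittleO.1 hh
  rw [hasFDerivAt_iff_isLittleO]
  have hg0 : (fun y => g y - g x) =o[nhds x] (fun _ => (1 : ℝ)) := by
    rw [Asymptotics.isLittleO_one_iff]
    have := hg.tendsto.sub_const (g x)
    simpa using this
  have h1 := (ho.const_mul_left (g x))
  have h2 := hO.norm_right.mul_isLittleO hg0
  simp only [mul_one] at h2
  refine (h1.add h2.of_norm_right).congr_left fun y => ?_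
  simp only [ContinuousLinearMap.smul_apply, smul_eq_mul]
  ring

lemma aux_Q_cont [Nonempty A] (P : S → A → S → ℝ) (hP0 : ∀ s a s', 0 ≤ P s a s')
    (hP1 : ∀ s a, ∑ s', P s a s' = 1) (γ : ℝ) (hγ0 : 0 < γ) (hγ1 : γ < 1)
    (r : S → A → ℝ) (hr0 : ∀ s a, 0 ≤ r s a) (hr1 : ∀ s a, r s a ≤ 1)
    (θ : S → A → ℝ) (s : S) (a : A) :
    ContinuousAt (fun θ' : S → A → ℝ => valueQ γ P (softmaxPol θ') r s a) θ := by
  have hV : ∀ x, ContinuousAt (fun θ' : S → A → ℝ => valueV γ P (softmaxPol θ') r x) θ := by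
    intro x
    have hperf : ∀ θ' : S → A → ℝ, valueV γ P (softmaxPol θ') r x = valueV γ P (softmaxPol θ) r x
        - ∑ s, auxD γ P (softmaxPol θ) (diracD x) s *
          ∑ a, (softmaxPol θ s a - softmaxPol θ' s a) * valueQ γ P (softmaxPol θ') r s a := by
      intro θ'
      rw [← aux_perf P hP0 hP1 γ hγ0 hγ1 (softmaxPol θ) (fun s a => (aux_sm_pos θ s a).le)
        (aux_sm_sum θ) (softmaxPol θ') (fun s a => (aux_sm_pos θ' s a).le)
        (aux_sm_sum θ') r (diracD x) (aux_dirac_nonneg x)]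
      simp [valueV]
    have hterm : ∀ s a, Filter.Tendsto (fun θ' : S → A → ℝ =>
        (softmaxPol θ s a - softmaxPol θ' s a) * valueQ γ P (softmaxPol θ') r s a)
        (nhds θ) (nhds 0) := by
      intro s a
      have h1 : Filter.Tendsto (fun θ' : S → A → ℝ =>
          |softmaxPol θ s a - softmaxPol θ' s a| * (1 + γ * (1 - γ)⁻¹)) (nhds θ) (nhds 0) := by
        have := (((aux_sm_deriv θ s a).continuousAt.tendsto.const_sub
          (softmaxPol θ s a)).abs).mul_const (1 + γ * (1 - γ)⁻¹)
        simpa using this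
      refine squeeze_zero_norm (fun θ' => ?_) h1
      rw [Real.norm_eq_abs, abs_mul]
      exact mul_le_mul_of_nonneg_left (aux_Q_bound P hP0 hP1 γ hγ0 hγ1 (softmaxPol θ')
        (fun s a => (aux_sm_pos θ' s a).le) (aux_sm_sum θ') r hr0 hr1 s a) (abs_nonneg _)
    have hall : Filter.Tendsto (fun θ' : S → A → ℝ => valueV γ P (softmaxPol θ) r x
        - ∑ s, auxD γ P (softmaxPol θ) (diracD x) s *
          ∑ a, (softmaxPol θ s a - softmaxPol θ' s a) * valueQ γ P (softmaxPol θ') r s a)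
        (nhds θ) (nhds (valueV γ P (softmaxPol θ) r x
        - ∑ s, auxD γ P (softmaxPol θ) (diracD x) s * ∑ a : A, 0)) :=
      tendsto_const_nhds.sub (tendsto_finsetSum _ fun s _ =>
        (tendsto_finsetSum _ fun a _ => hterm s a).const_mul _)
    simp only [Finset.sum_const_zero, mul_zero, sub_zero] at hall
    exact hall.congr fun θ' => (hperf θ').symm
  unfold valueQ
  exact continuousAt_const.add (continuousAt_const.mul
    (tendsto_finsetSum _ fun x _ => (continuousAt_const.mul (hV x)).tendsto))

lemma aux_grad [Nonempty A] (P : S → A → S → ℝ) (hP0 : ∀ s a s', 0 ≤ P s a s')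
    (hP1 : ∀ s a, ∑ s', P s a s' = 1) (γ : ℝ) (hγ0 : 0 < γ) (hγ1 : γ < 1)
    (r : S → A → ℝ) (hr0 : ∀ s a, 0 ≤ r s a) (hr1 : ∀ s a, r s a ≤ 1)
    (μ : S → ℝ) (hμ0 : ∀ s, 0 ≤ μ s) (θ : S → A → ℝ) :
    HasFDerivAt (fun θ' : S → A → ℝ => valueD γ P (softmaxPol θ') r μ)
      (∑ s, auxD γ P (softmaxPol θ) μ s •
        ∑ a, valueQ γ P (softmaxPol θ) r s a • auxL θ s a) θ := by
  have hperf : (fun θ' : S → A → ℝ => valueD γ P (softmaxPol θ') r μ) =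
      fun θ' => valueD γ P (softmaxPol θ) r μ + ∑ s, auxD γ P (softmaxPol θ) μ s *
        ∑ a, (softmaxPol θ' s a - softmaxPol θ s a) * valueQ γ P (softmaxPol θ') r s a := by
    funext θ'
    have h := aux_perf P hP0 hP1 γ hγ0 hγ1 (softmaxPol θ) (fun s a => (aux_sm_pos θ s a).le)
      (aux_sm_sum θ) (softmaxPol θ') (fun s a => (aux_sm_pos θ' s a).le)
      (aux_sm_sum θ') r μ hμ0
    have h2 : ∑ s, auxD γ P (softmaxPol θ) μ s *
        ∑ a, (softmaxPol θ' s a - softmaxPol θ s a) * valueQ γ P (softmaxPol θ') r s a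
        = - ∑ s, auxD γ P (softmaxPol θ) μ s *
        ∑ a, (softmaxPol θ s a - softmaxPol θ' s a) * valueQ γ P (softmaxPol θ') r s a := by
      rw [← Finset.sum_neg_distrib]
      refine Finset.sum_congr rfl fun s _ => ?_
      rw [← mul_neg, ← Finset.sum_neg_distrib]
      congr 1
      exact Finset.sum_congr rfl fun a _ => by ring
    rw [h2, ← h]; ring
  rw [hperf]
  refine HasFDerivAt.const_add _ (HasFDerivAt.fun_sum fun s _ => HasFDerivAt.const_mul
    (HasFDerivAt.fun_sum fun a _ => ?_) _)
  exact aux_mul (fun θ' : S → A → ℝ => softmaxPol θ' s a) _ _ _ (aux_sm_deriv θ s a)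
    (aux_Q_cont P hP0 hP1 γ hγ0 hγ1 r hr0 hr1 θ s a)

lemma aux_grad_coord [Nonempty A] [DecidableEq S] [DecidableEq A]
    (P : S → A → S → ℝ) (hP0 : ∀ s a s', 0 ≤ P s a s')
    (hP1 : ∀ s a, ∑ s', P s a s' = 1) (γ : ℝ) (hγ0 : 0 < γ) (hγ1 : γ < 1)
    (r : S → A → ℝ) (hr0 : ∀ s a, 0 ≤ r s a) (hr1 : ∀ s a, r s a ≤ 1)
    (μ : S → ℝ) (hμ0 : ∀ s, 0 ≤ μ s) (θ : S → A → ℝ) (s : S) (a : A) :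
    fderiv ℝ (fun θ' : S → A → ℝ => valueD γ P (softmaxPol θ') r μ) θ
      (Pi.single s (Pi.single a 1))
    = auxD γ P (softmaxPol θ) μ s * softmaxPol θ s a *
      (valueQ γ P (softmaxPol θ) r s a - valueV γ P (softmaxPol θ) r s) := by
  rw [(aux_grad P hP0 hP1 γ hγ0 hγ1 r hr0 hr1 μ hμ0 θ).fderiv]
  have hpr : ∀ x b, auxProj x b (Pi.single s (Pi.single a (1:ℝ)) : S → A → ℝ)
      = if x = s then (if b = a then 1 else 0) else 0 := by
    intro x b
    change (Pi.single s (Pi.single a (1:ℝ)) : S → A → ℝ) x b = _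
    by_cases hx : x = s
    · subst hx; simp [Pi.single_apply]
    · simp [hx]
  simp only [auxL, ContinuousLinearMap.smul_apply, ContinuousLinearMap.sub_apply,
    ContinuousLinearMap.sum_apply, smul_eq_mul, hpr]
  rw [Finset.sum_eq_single s (fun x _ hx => by simp [hx]) (fun h => absurd (Finset.mem_univ s) h)]
  simp only [if_true, mul_ite, mul_one, mul_zero, Finset.sum_ite_eq', Finset.mem_univ]
  rw [aux_bellman P hP0 hP1 γ hγ0 hγ1 (softmaxPol θ) (fun s a => (aux_sm_pos θ s a).le)
    (aux_sm_sum θ) r s, mul_assoc]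
  congr 1
  simp_rw [mul_sub, Finset.sum_sub_distrib, Finset.mul_sum]
  congr 1
  · simp [mul_comm]
  · exact Finset.sum_congr rfl fun b _ => by ring

lemma aux_det_sum (f : S → A) (s : S) (g : A → ℝ) :
    ∑ a, detPol f s a * g a = g (f s) := by
  simp [detPol]

end Aux

/-- Non-uniform Łojasiewicz inequality for the tabular softmax policy:
`‖∇_θ V^{π_θ}(μ)‖₂ ≥ min_s π_θ(a*(s)|s) · ‖d_ρ^{π*}/d_μ^{π_θ}‖_∞⁻¹ · (V*(ρ) − V^{π_θ}(ρ))/√|S|`. -/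
theorem nonuniform_lojasiewicz
    {S A : Type*} [Fintype S] [Nonempty S] [DecidableEq S]
    [Fintype A] [Nonempty A] [DecidableEq A]
    (P : S → A → S → ℝ)
    (hP0 : ∀ s a s', 0 ≤ P s a s') (hP1 : ∀ s a, ∑ s', P s a s' = 1)
    (r : S → A → ℝ) (hr0 : ∀ s a, 0 ≤ r s a) (hr1 : ∀ s a, r s a ≤ 1)
    (γ : ℝ) (hγ0 : 0 < γ) (hγ1 : γ < 1)
    (μ : S → ℝ) (hμ0 : ∀ s, 0 < μ s) (hμ1 : ∑ s, μ s = 1)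
    (ρ : S → ℝ) (hρ0 : ∀ s, 0 < ρ s) (hρ1 : ∑ s, ρ s = 1)
    -- π* is an optimal deterministic policy, with unique optimal action a*(s)
    (astar : S → A)
    (hopt : ∀ p : S → A → ℝ, (∀ s a, 0 ≤ p s a) → (∀ s, ∑ a, p s a = 1) →
      ∀ ρ' : S → ℝ, (∀ s, 0 ≤ ρ' s) → (∑ s, ρ' s = 1) →
        valueD γ P p r ρ' ≤ valueD γ P (detPol astar) r ρ')
    (huniq : ∀ s a, a ≠ astar s →
      r s a + γ * ∑ s', P s a s' * valueV γ P (detPol astar) r s'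
        < r s (astar s) + γ * ∑ s', P s (astar s) s' * valueV γ P (detPol astar) r s')
    (θ : S → A → ℝ) :
    (⨅ s : S, softmaxPol θ s (astar s)) *
        (⨆ s : S, occup γ P (detPol astar) ρ s / occup γ P (softmaxPol θ) μ s)⁻¹ *
        ((valueD γ P (detPol astar) r ρ - valueD γ P (softmaxPol θ) r ρ) /
          Real.sqrt (Fintype.card S))
      ≤ Real.sqrt (∑ s : S, ∑ a : A,
          (fderiv ℝ (fun θ' : S → A → ℝ => valueD γ P (softmaxPol θ') r μ) θ
            (Pi.single s (Pi.single a 1))) ^ 2) := by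
  have hπ0 := fun s a => (aux_sm_pos θ s a).le
  have hπ1 := aux_sm_sum θ
  have hd0 : ∀ s a, 0 ≤ detPol astar s a := by
    intro s a; unfold detPol; split_ifs <;> norm_num
  have hd1 : ∀ s, ∑ a, detPol astar s a = 1 := by
    intro s; simpa using aux_det_sum astar s (fun _ => 1)
  have hμn := fun s => (hμ0 s).le
  have hρn := fun s => (hρ0 s).le
  have hγ' : 0 < 1 - γ := by linarith
  set m := ⨅ s : S, softmaxPol θ s (astar s) with hm
  set M := ⨆ s : S, occup γ P (detPol astar) ρ s / occup γ P (softmaxPol θ) μ s with hM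
  have hDs : ∀ s, 0 < auxD γ P (detPol astar) ρ s := fun s =>
    (hρ0 s).trans_le (aux_D_ge P hP0 hP1 γ hγ0 hγ1 _ hd0 hd1 ρ hρn s)
  have hDm : ∀ s, 0 < auxD γ P (softmaxPol θ) μ s := fun s =>
    (hμ0 s).trans_le (aux_D_ge P hP0 hP1 γ hγ0 hγ1 _ hπ0 hπ1 μ hμn s)
  have hratio : ∀ s, occup γ P (detPol astar) ρ s / occup γ P (softmaxPol θ) μ s
      = auxD γ P (detPol astar) ρ s / auxD γ P (softmaxPol θ) μ s := fun s =>
    mul_div_mul_left _ _ hγ'.ne'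
  have hMge : ∀ s, auxD γ P (detPol astar) ρ s / auxD γ P (softmaxPol θ) μ s ≤ M := by
    intro s
    rw [← hratio, hM]
    exact le_ciSup (f := fun s => occup γ P (detPol astar) ρ s / occup γ P (softmaxPol θ) μ s)
      (Set.finite_range _).bddAbove s
  have hMpos : 0 < M := by
    obtain ⟨s⟩ := (inferInstance : Nonempty S)
    exact (div_pos (hDs s) (hDm s)).trans_le (hMge s)
  have hmle : ∀ s, m ≤ softmaxPol θ s (astar s) := fun s =>
    ciInf_le (f := fun s => softmaxPol θ s (astar s)) (Set.finite_range _).bddBelow s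
  have hm0 : 0 ≤ m := le_ciInf fun s => hπ0 s _
  set G : S → A → ℝ := fun s a =>
    fderiv ℝ (fun θ' : S → A → ℝ => valueD γ P (softmaxPol θ') r μ) θ
      (Pi.single s (Pi.single a 1)) with hG
  have hGe : ∀ s a, G s a = auxD γ P (softmaxPol θ) μ s * softmaxPol θ s a *
      (valueQ γ P (softmaxPol θ) r s a - valueV γ P (softmaxPol θ) r s) := fun s a =>
    aux_grad_coord P hP0 hP1 γ hγ0 hγ1 r hr0 hr1 μ hμn θ s a
  have hdiff : valueD γ P (detPol astar) r ρ - valueD γ P (softmaxPol θ) r ρ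
      = ∑ s, auxD γ P (detPol astar) ρ s *
        (valueQ γ P (softmaxPol θ) r s (astar s) - valueV γ P (softmaxPol θ) r s) := by
    rw [aux_perf P hP0 hP1 γ hγ0 hγ1 _ hd0 hd1 _ hπ0 hπ1 r ρ hρn]
    refine Finset.sum_congr rfl fun s _ => ?_
    rw [aux_bellman P hP0 hP1 γ hγ0 hγ1 _ hπ0 hπ1 r s]
    simp only [sub_mul, Finset.sum_sub_distrib, aux_det_sum]
  have hterm : ∀ s, m * M⁻¹ * (auxD γ P (detPol astar) ρ s *
      (valueQ γ P (softmaxPol θ) r s (astar s) - valueV γ P (softmaxPol θ) r s))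
      ≤ |G s (astar s)| := by
    intro s
    rw [hGe, abs_mul, abs_of_nonneg (mul_nonneg (hDm s).le (hπ0 s _))]
    set X := valueQ γ P (softmaxPol θ) r s (astar s) - valueV γ P (softmaxPol θ) r s
    have h1 : M⁻¹ * auxD γ P (detPol astar) ρ s ≤ auxD γ P (softmaxPol θ) μ s := by
      rw [inv_mul_le_iff₀ hMpos]
      exact (div_le_iff₀ (hDm s)).1 (hMge s)
    have h2 : m * (M⁻¹ * auxD γ P (detPol astar) ρ s)
        ≤ softmaxPol θ s (astar s) * auxD γ P (softmaxPol θ) μ s :=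
      mul_le_mul (hmle s) h1 (mul_nonneg (inv_nonneg.2 hMpos.le) (hDs s).le) (hπ0 s _)
    have h3 : 0 ≤ m * (M⁻¹ * auxD γ P (detPol astar) ρ s) :=
      mul_nonneg hm0 (mul_nonneg (inv_nonneg.2 hMpos.le) (hDs s).le)
    calc _ = m * (M⁻¹ * auxD γ P (detPol astar) ρ s) * X := by ring
      _ ≤ m * (M⁻¹ * auxD γ P (detPol astar) ρ s) * |X| :=
        mul_le_mul_of_nonneg_left (le_abs_self X) h3
      _ ≤ softmaxPol θ s (astar s) * auxD γ P (softmaxPol θ) μ s * |X| :=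
        mul_le_mul_of_nonneg_right h2 (abs_nonneg X)
      _ = _ := by ring
  have hcard : (0:ℝ) < Fintype.card S := by exact_mod_cast Fintype.card_pos
  have hsq : 0 < Real.sqrt (Fintype.card S) := Real.sqrt_pos.2 hcard
  have hcs : (∑ s, |G s (astar s)|) ^ 2 ≤ (Fintype.card S : ℝ) * ∑ s, ∑ a, G s a ^ 2 := by
    have h := sq_sum_le_card_mul_sum_sq (s := (Finset.univ : Finset S))
      (f := fun s => |G s (astar s)|)
    simp only [sq_abs, Finset.card_univ] at h
    refine h.trans (mul_le_mul_of_nonneg_left (Finset.sum_le_sum fun s _ => ?_) hcard.le)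
    exact Finset.single_le_sum (f := fun a => G s a ^ 2) (fun a _ => sq_nonneg _)
      (Finset.mem_univ (astar s))
  rw [← mul_div_assoc, div_le_iff₀ hsq, hdiff, Finset.mul_sum]
  refine (Finset.sum_le_sum fun s _ => hterm s).trans ?_
  rw [← Real.sqrt_mul (Finset.sum_nonneg fun s _ => Finset.sum_nonneg fun a _ => sq_nonneg _)]
  apply Real.le_sqrt_of_sq_le
  rw [mul_comm]
  exact hcs
end

section
/- The entropy-regularized objective L_λ(θ) = V^{π_θ}(μ) + Σ_{n=1}^N (λ/(|S_n||A_n|))·Σ_{s_n∈S_n, a_n∈A_n} log π_{θ_n}(a_n|s_n) is (48N²/(1−γ)³ + Σ_{n=1}^N 2λ/|S_n|)-smooth: for all parameters θ, θ', |L_λ(θ) − L_λ(θ') − ⟨∇_θ L_λ(θ), θ − θ'⟩| ≤ (24N²/(1−γ)³ + Σ_{n=1}^N λ/|S_n|)·‖θ − θ'‖₂². -/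
open Finset MeasureTheory
open scoped BigOperators Classical

/-- Second order remainder bound along a path. -/
lemma aux_taylor (f f' f'' : ℝ → ℝ) (M : ℝ)
    (h1 : ∀ u, HasDerivAt f (f' u) u) (h2 : ∀ u, HasDerivAt f' (f'' u) u)
    (hM : ∀ u, |f'' u| ≤ M) : |f 1 - f 0 - f' 0| ≤ M := by
  obtain ⟨c, hc, hc'⟩ := exists_hasDerivAt_eq_slope f f' (zero_lt_one)
    (fun x _ => (h1 x).continuousAt.continuousWithinAt) (fun x _ => h1 x)
  obtain ⟨d, hd, hd'⟩ := exists_hasDerivAt_eq_slope f' f'' hc.1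
    (fun x _ => (h2 x).continuousAt.continuousWithinAt) (fun x _ => h2 x)
  have e1 : f' c = f 1 - f 0 := by rw [hc']; simp
  have hc0 : 0 < c := hc.1
  have e2 : f' c - f' 0 = f'' d * c := by rw [hd', sub_zero, div_mul_cancel₀ _ hc0.ne']
  rw [← e1, e2, abs_mul, abs_of_pos hc0]
  have := hM d
  have h3 := hc.2.le
  nlinarith [abs_nonneg (f'' d)]

/-- First order bound along a path. -/
lemma aux_mvt (f f' : ℝ → ℝ) (M : ℝ)
    (h1 : ∀ u, HasDerivAt f (f' u) u)
    (hM : ∀ u, |f' u| ≤ M) : |f 1 - f 0| ≤ M := by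
  obtain ⟨c, hc, hc'⟩ := exists_hasDerivAt_eq_slope f f' (zero_lt_one)
    (fun x _ => (h1 x).continuousAt.continuousWithinAt) (fun x _ => h1 x)
  have e1 : f' c = f 1 - f 0 := by rw [hc']; simp
  rw [← e1]; exact hM c

/-- Softmax on a finite type. -/
noncomputable def auxSm {I : Type*} [Fintype I] (x : I → ℝ) (i : I) : ℝ :=
  Real.exp (x i) / ∑ j, Real.exp (x j)

section softmax
variable {I : Type*} [Fintype I] [Nonempty I]

lemma auxSm_den_pos (x : I → ℝ) : 0 < ∑ j, Real.exp (x j) :=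
  Finset.sum_pos (fun _ _ => Real.exp_pos _) Finset.univ_nonempty

lemma auxSm_nonneg (x : I → ℝ) (i : I) : 0 ≤ auxSm x i :=
  div_nonneg (Real.exp_pos _).le (auxSm_den_pos x).le

lemma auxSm_sum (x : I → ℝ) : ∑ i, auxSm x i = 1 := by
  unfold auxSm
  rw [← Finset.sum_div]
  exact div_self (auxSm_den_pos x).ne'

/-- Averages of bounded functions are bounded. -/
lemma aux_avg_bound {I : Type*} [Fintype I] (p f : I → ℝ) (c : ℝ) (hp : ∀ i, 0 ≤ p i)
    (hp1 : ∑ i, p i = 1)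
    (hf : ∀ i, |f i| ≤ c) : |∑ i, p i * f i| ≤ c := by
  calc |∑ i, p i * f i| ≤ ∑ i, |p i * f i| := Finset.abs_sum_le_sum_abs _ _
    _ ≤ ∑ i, p i * c := Finset.sum_le_sum fun i _ => by
        rw [abs_mul, abs_of_nonneg (hp i)]
        exact mul_le_mul_of_nonneg_left (hf i) (hp i)
    _ = c := by rw [← Finset.sum_mul, hp1, one_mul]

lemma auxSm_avg_eq (x f : I → ℝ) :
    ∑ i, auxSm x i * f i = (∑ i, Real.exp (x i) * f i) / ∑ j, Real.exp (x j) := by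
  unfold auxSm
  rw [Finset.sum_div]
  exact Finset.sum_congr rfl fun i _ => by ring

lemma auxSm_num_deriv (x w f : I → ℝ) (u : ℝ) :
    HasDerivAt (fun u : ℝ => ∑ i, Real.exp (x i + u * w i) * f i)
      (∑ i, Real.exp (x i + u * w i) * (f i * w i)) u := by
  apply HasDerivAt.fun_sum
  intro i _
  have h : HasDerivAt (fun u : ℝ => x i + u * w i) (w i) u := by
    simpa using ((hasDerivAt_id u).mul_const (w i)).const_add (x i)
  exact (h.exp.mul_const (f i)).congr_deriv (by ring)

lemma auxSm_den_deriv (x w : I → ℝ) (u : ℝ) :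
    HasDerivAt (fun u : ℝ => ∑ i, Real.exp (x i + u * w i))
      (∑ i, Real.exp (x i + u * w i) * w i) u := by
  simpa using auxSm_num_deriv x w (fun _ => 1) u

lemma auxSm_avg_deriv (x w f : I → ℝ) (u : ℝ) :
    HasDerivAt (fun u : ℝ => ∑ i, auxSm (fun j => x j + u * w j) i * f i)
      ((∑ i, auxSm (fun j => x j + u * w j) i * (f i * w i)) -
        (∑ i, auxSm (fun j => x j + u * w j) i * f i) *
        (∑ i, auxSm (fun j => x j + u * w j) i * w i)) u := by
  simp only [auxSm_avg_eq]
  have hd := (auxSm_den_pos (fun j => x j + u * w j)).ne'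
  exact ((auxSm_num_deriv x w f u).fun_div (auxSm_den_deriv x w u) hd).congr_deriv
    (by field_simp)

lemma auxSm_lse (x w : I → ℝ) (B : ℝ) (hw : ∀ i, |w i| ≤ B) :
    |Real.log (∑ i, Real.exp (x i + w i)) - Real.log (∑ i, Real.exp (x i))
      - ∑ i, auxSm x i * w i| ≤ B ^ 2 := by
  have key := aux_taylor (fun u => Real.log (∑ i, Real.exp (x i + u * w i)))
    (fun u => ∑ i, auxSm (fun j => x j + u * w j) i * w i) _ (B ^ 2)
    (fun u => by
      have h := (auxSm_den_deriv x w u).log (auxSm_den_pos (fun j => x j + u * w j)).ne'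
      rw [auxSm_avg_eq]
      exact h)
    (fun u => auxSm_avg_deriv x w w u)
    (fun u => by
      have h1 := aux_avg_bound _ (fun i => w i * w i) (B ^ 2)
        (auxSm_nonneg (fun j => x j + u * w j)) (auxSm_sum _)
        (fun i => by
          rw [abs_mul, ← sq]; exact pow_le_pow_left₀ (abs_nonneg _) (hw i) 2)
      have h2 := aux_avg_bound _ w B
        (auxSm_nonneg (fun j => x j + u * w j)) (auxSm_sum _) hw
      have h3 : 0 ≤ ∑ i, auxSm (fun j => x j + u * w j) i * (w i * w i) :=
        Finset.sum_nonneg fun i _ => mul_nonneg (auxSm_nonneg _ _) (mul_self_nonneg _)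
      have h4 := pow_le_pow_left₀ (abs_nonneg _) h2 2
      rw [sq_abs] at h4
      rw [abs_le] at h1 ⊢
      constructor <;> nlinarith [h1.1, h1.2, sq_nonneg (∑ i, auxSm (fun j => x j + u * w j) i * w i)])
  simpa using key

lemma aux_sign_abs {I : Type*} [Fintype I] (f : I → ℝ) :
    ∃ σ : I → ℝ, (∀ i, |σ i| ≤ 1) ∧ ∑ i, |f i| = ∑ i, f i * σ i := by
  refine ⟨fun i => if 0 ≤ f i then 1 else -1, fun i => ?_, Finset.sum_congr rfl fun i _ => ?_⟩
  · dsimp only; split_ifs <;> simp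
  · dsimp only
    split_ifs with h
    · rw [abs_of_nonneg h, mul_one]
    · rw [abs_of_neg (not_le.mp h)]; ring

lemma auxSm_first (x w : I → ℝ) (B : ℝ) (hB : 0 ≤ B) (hw : ∀ i, |w i| ≤ B) :
    ∑ i, |auxSm (fun j => x j + w j) i - auxSm x i| ≤ 2 * B := by
  obtain ⟨σ, hσ, e⟩ := aux_sign_abs (fun i => auxSm (fun j => x j + w j) i - auxSm x i)
  rw [e]
  have key := aux_mvt (fun u => ∑ i, auxSm (fun j => x j + u * w j) i * σ i) _ (2 * B)
    (fun u => auxSm_avg_deriv x w σ u)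
    (fun u => by
      have n0 := auxSm_nonneg (fun j => x j + u * w j)
      have n1 := auxSm_sum (fun j => x j + u * w j)
      have a1 := aux_avg_bound _ (fun i => σ i * w i) B n0 n1 (fun i => by
        rw [abs_mul]
        calc |σ i| * |w i| ≤ 1 * B := mul_le_mul (hσ i) (hw i) (abs_nonneg _) zero_le_one
          _ = B := one_mul B)
      have a2 := aux_avg_bound _ σ 1 n0 n1 hσ
      have a3 := aux_avg_bound _ w B n0 n1 hw
      refine (abs_sub _ _).trans ?_
      rw [abs_mul]
      have := mul_le_mul a2 a3 (abs_nonneg _) zero_le_one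
      linarith)
  refine le_trans (le_of_eq ?_) ((le_abs_self _).trans key)
  simp [sub_mul, Finset.sum_sub_distrib]

lemma auxSm_second (x w : I → ℝ) (B : ℝ) (hB : 0 ≤ B) (hw : ∀ i, |w i| ≤ B) :
    ∑ i, |auxSm (fun j => x j + w j) i - auxSm x i
      - auxSm x i * (w i - ∑ j, auxSm x j * w j)| ≤ 6 * B ^ 2 := by
  obtain ⟨σ, hσ, e⟩ := aux_sign_abs (fun i => auxSm (fun j => x j + w j) i - auxSm x i
      - auxSm x i * (w i - ∑ j, auxSm x j * w j))
  rw [e]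
  have key := aux_taylor (fun u => ∑ i, auxSm (fun j => x j + u * w j) i * σ i)
    (fun u => (∑ i, auxSm (fun j => x j + u * w j) i * (σ i * w i)) -
        (∑ i, auxSm (fun j => x j + u * w j) i * σ i) *
        (∑ i, auxSm (fun j => x j + u * w j) i * w i)) _ (6 * B ^ 2)
    (fun u => auxSm_avg_deriv x w σ u)
    (fun u => (auxSm_avg_deriv x w (fun i => σ i * w i) u).sub
      ((auxSm_avg_deriv x w σ u).mul (auxSm_avg_deriv x w w u)))
    (fun u => by
      have n0 := auxSm_nonneg (fun j => x j + u * w j)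
      have n1 := auxSm_sum (fun j => x j + u * w j)
      have hσw : ∀ i, |σ i * w i| ≤ B := fun i => by
        rw [abs_mul]
        calc |σ i| * |w i| ≤ 1 * B := mul_le_mul (hσ i) (hw i) (abs_nonneg _) zero_le_one
          _ = B := one_mul B
      have a1 := aux_avg_bound _ (fun i => σ i * w i) B n0 n1 hσw
      have a2 := aux_avg_bound _ σ 1 n0 n1 hσ
      have a3 := aux_avg_bound _ w B n0 n1 hw
      have a4 := aux_avg_bound _ (fun i => σ i * w i * w i) (B * B) n0 n1 (fun i => by
        rw [abs_mul]; exact mul_le_mul (hσw i) (hw i) (abs_nonneg _) hB)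
      have a5 := aux_avg_bound _ (fun i => w i * w i) (B * B) n0 n1 (fun i => by
        rw [abs_mul]; exact mul_le_mul (hw i) (hw i) (abs_nonneg _) hB)
      generalize (∑ i, auxSm (fun j => x j + u * w j) i * (σ i * w i)) = t1 at *
      generalize (∑ i, auxSm (fun j => x j + u * w j) i * σ i) = t2 at *
      generalize (∑ i, auxSm (fun j => x j + u * w j) i * w i) = t3 at *
      generalize (∑ i, auxSm (fun j => x j + u * w j) i * (σ i * w i * w i)) = t4 at *
      generalize (∑ i, auxSm (fun j => x j + u * w j) i * (w i * w i)) = t5 at *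
      have b1 : |t1 * t3| ≤ B * B := by
        rw [abs_mul]; exact mul_le_mul a1 a3 (abs_nonneg _) hB
      have b2 : |t2 * t5| ≤ 1 * (B * B) := by
        rw [abs_mul]; exact mul_le_mul a2 a5 (abs_nonneg _) zero_le_one
      have b3 : |t2 * (t3 * t3)| ≤ 1 * (B * B) := by
        rw [abs_mul, abs_mul]
        exact mul_le_mul a2 (mul_le_mul a3 a3 (abs_nonneg _) hB) (by positivity) zero_le_one
      rw [abs_le] at *
      constructor <;> nlinarith)
  refine le_trans (le_of_eq ?_) ((le_abs_self _).trans key)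
  simp only [one_mul, zero_mul, add_zero, sub_mul, mul_sub, Finset.sum_sub_distrib]
  congr 2
  · exact Finset.sum_congr rfl fun i _ => by ring
  · rw [Finset.sum_mul]
    exact Finset.sum_congr rfl fun i _ => by ring

end softmax

section mdp
variable {GS GA : Type*} [Fintype GS] [Fintype GA]

/-- Operator `I - γ P_p`. -/
noncomputable def auxT (γ : ℝ) (K : GS → GA → GS → ℝ) (p : GS → GA → ℝ) :
    (GS → ℝ) →ₗ[ℝ] (GS → ℝ) where
  toFun x := fun s => x s - γ * ∑ a, p s a * ∑ s', K s a s' * x s'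
  map_add' x y := by
    funext s
    simp only [Pi.add_apply, mul_add, Finset.sum_add_distrib]
    ring
  map_smul' c x := by
    funext s
    simp only [Pi.smul_apply, smul_eq_mul, RingHom.id_apply, mul_sub, Finset.mul_sum]
    congr 1
    refine Finset.sum_congr rfl fun a _ => Finset.sum_congr rfl fun s' _ => by ring

lemma auxT_apply (γ : ℝ) (K : GS → GA → GS → ℝ) (p : GS → GA → ℝ) (x : GS → ℝ) (s : GS) :
    auxT γ K p x s = x s - γ * ∑ a, p s a * ∑ s', K s a s' * x s' := rfl

lemma auxT_bound (γ : ℝ) (hγ0 : 0 < γ) (hγ1 : γ < 1)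
    (K : GS → GA → GS → ℝ) (hK0 : ∀ s a s', 0 ≤ K s a s') (hK1 : ∀ s a, ∑ s', K s a s' = 1)
    (p : GS → GA → ℝ) (hp0 : ∀ s a, 0 ≤ p s a) (hp1 : ∀ s, ∑ a, p s a = 1)
    (x : GS → ℝ) (c : ℝ) (h : ∀ s, |auxT γ K p x s| ≤ c) (s : GS) :
    |x s| ≤ c / (1 - γ) := by
  have : Nonempty GS := ⟨s⟩
  obtain ⟨m, hm⟩ := Finite.exists_max (fun s => |x s|)
  have h1 := h m
  rw [auxT_apply] at h1
  have h2 := aux_avg_bound (p m) (fun a => ∑ s', K m a s' * x s') |x m| (hp0 m) (hp1 m)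
    (fun a => aux_avg_bound (K m a) x |x m| (hK0 m a) (hK1 m a) hm)
  have h3 := abs_sub_abs_le_abs_sub (x m) (γ * ∑ a, p m a * ∑ s', K m a s' * x s')
  rw [abs_mul, abs_of_pos hγ0] at h3
  rw [le_div_iff₀ (by linarith)]
  have := hm s
  nlinarith

lemma auxT_inj (γ : ℝ) (hγ0 : 0 < γ) (hγ1 : γ < 1)
    (K : GS → GA → GS → ℝ) (hK0 : ∀ s a s', 0 ≤ K s a s') (hK1 : ∀ s a, ∑ s', K s a s' = 1)
    (p : GS → GA → ℝ) (hp0 : ∀ s a, 0 ≤ p s a) (hp1 : ∀ s, ∑ a, p s a = 1) :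
    Function.Injective (auxT γ K p) := by
  rw [← LinearMap.ker_eq_bot, LinearMap.ker_eq_bot']
  intro x hx
  funext s
  have := auxT_bound γ hγ0 hγ1 K hK0 hK1 p hp0 hp1 x 0 (fun s => by simp [hx]) s
  simpa using this

/-- The resolvent. -/
lemma auxT_resolvent (γ : ℝ) (hγ0 : 0 < γ) (hγ1 : γ < 1)
    (K : GS → GA → GS → ℝ) (hK0 : ∀ s a s', 0 ≤ K s a s') (hK1 : ∀ s a, ∑ s', K s a s' = 1)
    (p : GS → GA → ℝ) (hp0 : ∀ s a, 0 ≤ p s a) (hp1 : ∀ s, ∑ a, p s a = 1) :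
    ∃ G : (GS → ℝ) →ₗ[ℝ] (GS → ℝ), ∀ f, auxT γ K p (G f) = f :=
  ⟨(LinearEquiv.ofInjectiveEndo _ (auxT_inj γ hγ0 hγ1 K hK0 hK1 p hp0 hp1)).symm.toLinearMap,
    fun f => (LinearEquiv.ofInjectiveEndo _
      (auxT_inj γ hγ0 hγ1 K hK0 hK1 p hp0 hp1)).apply_symm_apply f⟩

lemma aux_stateDist (K : GS → GA → GS → ℝ) (hK0 : ∀ s a s', 0 ≤ K s a s')
    (hK1 : ∀ s a, ∑ s', K s a s' = 1)
    (p : GS → GA → ℝ) (hp0 : ∀ s a, 0 ≤ p s a) (hp1 : ∀ s, ∑ a, p s a = 1)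
    (μ : GS → ℝ) (hμ0 : ∀ s, 0 ≤ μ s) (hμ1 : ∑ s, μ s = 1) (t : ℕ) :
    (∀ s, 0 ≤ stateDist K p μ t s) ∧ ∑ s, stateDist K p μ t s = 1 := by
  induction t with
  | zero => exact ⟨hμ0, hμ1⟩
  | succ t ih =>
    refine ⟨fun s' => Finset.sum_nonneg fun s _ => Finset.sum_nonneg fun a _ =>
      mul_nonneg (mul_nonneg (ih.1 s) (hp0 s a)) (hK0 s a s'), ?_⟩
    simp only [stateDist]
    rw [Finset.sum_comm]
    rw [← ih.2]
    refine Finset.sum_congr rfl fun s _ => ?_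
    rw [Finset.sum_comm]
    simp only [← Finset.mul_sum, hK1, mul_one, hp1]

lemma aux_valueD (γ : ℝ) (hγ0 : 0 < γ) (hγ1 : γ < 1)
    (K : GS → GA → GS → ℝ) (hK0 : ∀ s a s', 0 ≤ K s a s') (hK1 : ∀ s a, ∑ s', K s a s' = 1)
    (p : GS → GA → ℝ) (hp0 : ∀ s a, 0 ≤ p s a) (hp1 : ∀ s, ∑ a, p s a = 1)
    (μ : GS → ℝ) (hμ0 : ∀ s, 0 ≤ μ s) (hμ1 : ∑ s, μ s = 1)
    (R : GS → GA → ℝ) (V : GS → ℝ)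
    (hV : auxT γ K p V = fun s => ∑ a, p s a * R s a) :
    valueD γ K p R μ = ∑ s, μ s * V s := by
  have hd := aux_stateDist K hK0 hK1 p hp0 hp1 μ hμ0 hμ1
  set m : ℕ → ℝ := fun t => ∑ s, stateDist K p μ t s * V s with hm
  have hstep : ∀ t, expReward K p R μ t = m t - γ * m (t + 1) := by
    intro t
    have e1 : m (t + 1) = ∑ s, stateDist K p μ t s * ∑ a, p s a * ∑ s', K s a s' * V s' := by
      simp only [hm, stateDist, Finset.sum_mul, Finset.mul_sum]
      rw [Finset.sum_comm]
      refine Finset.sum_congr rfl fun s _ => ?_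
      rw [Finset.sum_comm]
      refine Finset.sum_congr rfl fun a _ => Finset.sum_congr rfl fun s' _ => by ring
    rw [e1]
    simp only [hm, expReward]
    rw [Finset.mul_sum, ← Finset.sum_sub_distrib]
    refine Finset.sum_congr rfl fun s _ => ?_
    have := congrFun hV s
    rw [auxT_apply] at this
    calc ∑ a, stateDist K p μ t s * p s a * R s a
        = stateDist K p μ t s * ∑ a, p s a * R s a := by
          rw [Finset.mul_sum]; exact Finset.sum_congr rfl fun a _ => by ring
      _ = _ := by rw [← this]; ring
  have hmb : ∀ t, |m t| ≤ ‖V‖ := fun t =>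
    aux_avg_bound _ V ‖V‖ (hd t).1 (hd t).2 (fun s => norm_le_pi_norm V s)
  have hsum : Summable (fun t => γ ^ t * m t) := by
    refine Summable.of_norm_bounded (g := fun t => γ ^ t * ‖V‖)
      ((summable_geometric_of_lt_one hγ0.le hγ1).mul_right _) (fun t => ?_)
    rw [Real.norm_eq_abs, abs_mul, abs_of_pos (pow_pos hγ0 t)]
    exact mul_le_mul_of_nonneg_left (hmb t) (pow_pos hγ0 t).le
  have hsum' := (summable_nat_add_iff 1).mpr hsum
  unfold valueD
  have : ∀ t, γ ^ t * expReward K p R μ t = γ ^ t * m t - γ ^ (t + 1) * m (t + 1) := by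
    intro t; rw [hstep, pow_succ]; ring
  simp only [this]
  rw [hsum.tsum_sub hsum', hsum.tsum_eq_zero_add]
  simp [hm, stateDist]

/-- Quadratic remainder for the value, in terms of policy perturbations. -/
lemma aux_value_remainder (γ : ℝ) (hγ0 : 0 < γ) (hγ1 : γ < 1)
    (K : GS → GA → GS → ℝ) (hK0 : ∀ s a s', 0 ≤ K s a s') (hK1 : ∀ s a, ∑ s', K s a s' = 1)
    (R : GS → GA → ℝ) (hR : ∀ s a, |R s a| ≤ 1)
    (μ : GS → ℝ) (hμ0 : ∀ s, 0 ≤ μ s) (hμ1 : ∑ s, μ s = 1)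
    (p : GS → GA → ℝ) (hp0 : ∀ s a, 0 ≤ p s a) (hp1 : ∀ s, ∑ a, p s a = 1) :
    ∃ D : (GS → GA → ℝ) →ₗ[ℝ] ℝ, ∀ (p' : GS → GA → ℝ), (∀ s a, 0 ≤ p' s a) →
      (∀ s, ∑ a, p' s a = 1) → ∀ (q : GS → GA → ℝ) (B : ℝ), 0 ≤ B →
      (∀ s, ∑ a, |p' s a - p s a| ≤ 2 * B) →
      (∀ s, ∑ a, |p' s a - p s a - q s a| ≤ 6 * B ^ 2) →
      |valueD γ K p' R μ - valueD γ K p R μ - D q| ≤ 10 * B ^ 2 / (1 - γ) ^ 3 := by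
  obtain ⟨G, hG⟩ := auxT_resolvent γ hγ0 hγ1 K hK0 hK1 p hp0 hp1
  have hg : 0 < 1 - γ := by linarith
  set V := G (fun s => ∑ a, p s a * R s a) with hVdef
  have hV : auxT γ K p V = fun s => ∑ a, p s a * R s a := hG _
  set Q : GS → GA → ℝ := fun s a => R s a + γ * ∑ s', K s a s' * V s' with hQ
  have hVb : ∀ s, |V s| ≤ 1 / (1 - γ) := auxT_bound γ hγ0 hγ1 K hK0 hK1 p hp0 hp1 V 1
    (fun s => by rw [hV]; exact aux_avg_bound _ _ 1 (hp0 s) (hp1 s) (hR s))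
  have hQb : ∀ s a, |Q s a| ≤ 1 / (1 - γ) := by
    intro s a
    have h1 := aux_avg_bound (K s a) V _ (hK0 s a) (hK1 s a) hVb
    calc |Q s a| ≤ |R s a| + |γ * ∑ s', K s a s' * V s'| := abs_add_le _ _
      _ ≤ 1 + γ * (1 / (1 - γ)) := by
        rw [abs_mul, abs_of_pos hγ0]
        exact add_le_add (hR s a) (mul_le_mul_of_nonneg_left h1 hγ0.le)
      _ = 1 / (1 - γ) := by field_simp; ring
  have hl1 : ∀ (q : GA → ℝ) (f : GA → ℝ) (c d : ℝ), 0 ≤ d → (∑ a, |q a| ≤ c) →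
      (∀ a, |f a| ≤ d) → |∑ a, q a * f a| ≤ c * d := by
    intro q f c d hd hq hf
    calc |∑ a, q a * f a| ≤ ∑ a, |q a * f a| := Finset.abs_sum_le_sum_abs _ _
      _ ≤ ∑ a, |q a| * d := Finset.sum_le_sum fun i _ => by
          rw [abs_mul]; exact mul_le_mul_of_nonneg_left (hf i) (abs_nonneg _)
      _ ≤ c * d := by rw [← Finset.sum_mul]; exact mul_le_mul_of_nonneg_right hq hd
  let E : (GS → GA → ℝ) →ₗ[ℝ] (GS → ℝ) :=
    { toFun := fun q s => ∑ a, q s a * Q s a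
      map_add' := fun q q' => by
        funext s; simp [add_mul, Finset.sum_add_distrib]
      map_smul' := fun c q => by
        funext s; simp [Finset.mul_sum, mul_assoc] }
  let M : (GS → ℝ) →ₗ[ℝ] ℝ :=
    { toFun := fun x => ∑ s, μ s * x s
      map_add' := fun q q' => by simp [mul_add, Finset.sum_add_distrib]
      map_smul' := fun c q => by
        simp only [Pi.smul_apply, smul_eq_mul, RingHom.id_apply, Finset.mul_sum]
        exact Finset.sum_congr rfl fun s _ => by ring }
  refine ⟨M ∘ₗ G ∘ₗ E, ?_⟩
  intro p' hp'0 hp'1 q B hB h1 h2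
  obtain ⟨G', hG'⟩ := auxT_resolvent γ hγ0 hγ1 K hK0 hK1 p' hp'0 hp'1
  set V' := G' (fun s => ∑ a, p' s a * R s a) with hV'def
  have hV' : auxT γ K p' V' = fun s => ∑ a, p' s a * R s a := hG' _
  rw [aux_valueD γ hγ0 hγ1 K hK0 hK1 p' hp'0 hp'1 μ hμ0 hμ1 R V' hV',
    aux_valueD γ hγ0 hγ1 K hK0 hK1 p hp0 hp1 μ hμ0 hμ1 R V hV]
  set Z := G (E q) with hZdef
  have hZ : auxT γ K p Z = E q := hG _
  have hY : ∀ s, auxT γ K p' (V' - V) s = ∑ a, (p' s a - p s a) * Q s a := by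
    intro s
    rw [map_sub, Pi.sub_apply, hV']
    have e := congrFun hV s
    rw [auxT_apply] at e
    rw [auxT_apply]
    simp only [hQ, sub_mul, mul_add, Finset.sum_add_distrib, Finset.sum_sub_distrib]
    rw [← e]
    simp only [mul_left_comm _ γ, ← Finset.mul_sum]
    ring
  have hYb : ∀ s, |(V' - V) s| ≤ 2 * B * (1 / (1 - γ)) / (1 - γ) :=
    auxT_bound γ hγ0 hγ1 K hK0 hK1 p' hp'0 hp'1 _ _ (fun s => by
      rw [hY]; exact hl1 _ _ _ _ (by positivity) (h1 s) (hQb s))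
  have hW : ∀ s, auxT γ K p (V' - V - Z) s = ∑ a, (p' s a - p s a - q s a) * Q s a
      + γ * ∑ a, (p' s a - p s a) * ∑ s', K s a s' * (V' - V) s' := by
    intro s
    have e := hY s
    rw [auxT_apply] at e
    rw [map_sub, Pi.sub_apply, hZ, auxT_apply]
    simp only [E, LinearMap.coe_mk, AddHom.coe_mk]
    simp only [sub_mul, Finset.sum_sub_distrib] at e ⊢
    linarith
  have hWb := auxT_bound γ hγ0 hγ1 K hK0 hK1 p hp0 hp1 (V' - V - Z)
    (6 * B ^ 2 * (1 / (1 - γ)) + 2 * B * (2 * B * (1 / (1 - γ)) / (1 - γ))) (fun s => by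
      rw [hW]
      refine (abs_add_le _ _).trans (add_le_add ?_ ?_)
      · exact hl1 _ _ _ _ (by positivity) (h2 s) (hQb s)
      · rw [abs_mul, abs_of_pos hγ0]
        refine le_trans (mul_le_of_le_one_left (abs_nonneg _) hγ1.le) ?_
        exact hl1 _ _ _ _ (by positivity) (h1 s)
          (fun a => aux_avg_bound _ _ _ (hK0 s a) (hK1 s a) hYb))
  have e : ∑ s, μ s * V' s - ∑ s, μ s * V s - (M ∘ₗ G ∘ₗ E) q
      = ∑ s, μ s * (V' - V - Z) s := by
    simp [M, hZdef, mul_sub, Finset.sum_sub_distrib]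
  rw [e]
  refine (aux_avg_bound μ _ _ hμ0 hμ1 hWb).trans ?_
  have : (6 * B ^ 2 * (1 / (1 - γ)) + 2 * B * (2 * B * (1 / (1 - γ)) / (1 - γ))) / (1 - γ)
      = (6 * B ^ 2 * (1 - γ) + 4 * B ^ 2) / (1 - γ) ^ 3 := by
    field_simp; ring
  rw [this]
  apply div_le_div_of_nonneg_right _ (by positivity)
  nlinarith [sq_nonneg B, mul_nonneg (sq_nonneg B) hγ0.le]

end mdp

section multi
variable {N : ℕ} {S A : Fin N → Type*}
    [∀ n, Fintype (S n)] [∀ n, Fintype (A n)]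

lemma aux_entry_le (v : ∀ n, S n → A n → ℝ) (n : Fin N) (s : S n) (a : A n) :
    |v n s a| ≤ eucNorm v := by
  unfold eucNorm sqNorm
  apply Real.abs_le_sqrt
  refine le_trans ?_ (Finset.single_le_sum (f := fun n => ∑ s, ∑ a, (v n s a) ^ 2)
    (fun n _ => Finset.sum_nonneg fun s _ => Finset.sum_nonneg fun a _ => sq_nonneg _)
    (Finset.mem_univ n))
  refine le_trans ?_ (Finset.single_le_sum (f := fun s => ∑ a, (v n s a) ^ 2)
    (fun s _ => Finset.sum_nonneg fun a _ => sq_nonneg _) (Finset.mem_univ s))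
  exact Finset.single_le_sum (f := fun a => (v n s a) ^ 2)
    (fun a _ => sq_nonneg _) (Finset.mem_univ a)

lemma aux_sqNorm_nonneg (v : ∀ n, S n → A n → ℝ) : 0 ≤ sqNorm v :=
  Finset.sum_nonneg fun n _ => Finset.sum_nonneg fun s _ => Finset.sum_nonneg fun a _ =>
    sq_nonneg _

lemma aux_eucNorm_sq (v : ∀ n, S n → A n → ℝ) : eucNorm v ^ 2 = sqNorm v :=
  Real.sq_sqrt (aux_sqNorm_nonneg v)

lemma aux_sqNorm_le (v : ∀ n, S n → A n → ℝ) :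
    sqNorm v ≤ (∑ n : Fin N, ∑ _s : S n, ∑ _a : A n, (1 : ℝ)) * ‖v‖ ^ 2 := by
  unfold sqNorm
  simp only [Finset.sum_mul, one_mul]
  refine Finset.sum_le_sum fun n _ => Finset.sum_le_sum fun s _ => Finset.sum_le_sum fun a _ => ?_
  rw [← sq_abs]
  refine pow_le_pow_left₀ (abs_nonneg _) ?_ 2
  exact ((norm_le_pi_norm (v n s) a).trans (norm_le_pi_norm (v n) s)).trans (norm_le_pi_norm v n)

lemma aux_gPolicy (θ : ∀ n, S n → A n → ℝ) (s : ∀ n, S n) (a : ∀ n, A n) :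
    gPolicy θ s a = auxSm (fun b : ∀ n, A n => ∑ n, θ n (s n) (b n)) a := by
  unfold gPolicy auxSm softmaxPol
  simp only [Real.exp_sum]
  rw [Finset.prod_div_distrib, Finset.prod_univ_sum, Fintype.piFinset_univ]

lemma aux_gKernel_sum (P : ∀ n, S n → A n → S n → ℝ)
    (hP1 : ∀ n sn an, ∑ s'n, P n sn an s'n = 1) (s : ∀ n, S n) (a : ∀ n, A n) :
    ∑ s', gKernel P s a s' = 1 := by
  unfold gKernel
  have := Finset.prod_univ_sum (fun n => (Finset.univ : Finset (S n)))
    (fun n s' => P n (s n) (a n) s')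
  rw [Fintype.piFinset_univ] at this
  rw [← this]
  simp [hP1]

/-- A global quadratic remainder identifies the derivative. -/
lemma aux_deriv_of_remainder (F : (∀ n, S n → A n → ℝ) → ℝ) (θ : ∀ n, S n → A n → ℝ)
    (D : (∀ n, S n → A n → ℝ) →ₗ[ℝ] ℝ) (C : ℝ) (hC : 0 ≤ C)
    (h : ∀ θ', |F θ' - F θ - D (θ' - θ)| ≤ C * sqNorm (θ' - θ)) :
    HasFDerivAt F (LinearMap.toContinuousLinearMap D) θ := by
  have h0 : HasFDerivAt (fun θ' => F θ' - F θ - (LinearMap.toContinuousLinearMap D) (θ' - θ))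
      (0 : (∀ n, S n → A n → ℝ) →L[ℝ] ℝ) θ := by
    refine Asymptotics.IsBigO.hasFDerivAt (n := 2) ?_ one_lt_two
    refine Asymptotics.IsBigO.of_bound
      (C * (∑ n : Fin N, ∑ _s : S n, ∑ _a : A n, (1 : ℝ))) (Filter.Eventually.of_forall ?_)
    intro θ'
    rw [Real.norm_eq_abs, Real.norm_eq_abs, abs_of_nonneg (sq_nonneg ‖θ' - θ‖), mul_assoc]
    exact (h θ').trans (mul_le_mul_of_nonneg_left (aux_sqNorm_le _) hC)
  have h1 := (h0.add ((LinearMap.toContinuousLinearMap D).hasFDerivAt.comp θ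
    ((hasFDerivAt_id θ).sub_const θ))).add_const (F θ)
  have e1 : LinearMap.toContinuousLinearMap D = 0 + LinearMap.toContinuousLinearMap D ∘SL
      ContinuousLinearMap.id ℝ ((n : Fin N) → S n → A n → ℝ) := by
    rw [zero_add, ContinuousLinearMap.comp_id]
  rw [e1]
  refine h1.congr_of_eventuallyEq (Filter.Eventually.of_forall fun x => ?_)
  simp

lemma aux_reg_remainder [∀ n, Nonempty (A n)] (θ : ∀ n, S n → A n → ℝ) (n : Fin N) :
    ∃ D : (∀ n, S n → A n → ℝ) →ₗ[ℝ] ℝ, ∀ θ' : ∀ n, S n → A n → ℝ,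
      |(∑ sn, ∑ an, Real.log (softmaxPol (θ' n) sn an))
        - (∑ sn, ∑ an, Real.log (softmaxPol (θ n) sn an)) - D (θ' - θ)|
      ≤ (Fintype.card (A n) : ℝ) * sqNorm (θ' - θ) := by
  let D : (∀ n, S n → A n → ℝ) →ₗ[ℝ] ℝ :=
    { toFun := fun v => ∑ sn, ∑ an, (v n sn an - ∑ b, auxSm (θ n sn) b * v n sn b)
      map_add' := fun v w => by
        simp only [Pi.add_apply, ← Finset.sum_add_distrib]
        refine Finset.sum_congr rfl fun s _ => Finset.sum_congr rfl fun a _ => ?_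
        simp only [mul_add, Finset.sum_add_distrib]; ring
      map_smul' := fun c v => by
        simp only [Pi.smul_apply, smul_eq_mul, RingHom.id_apply, Finset.mul_sum, mul_sub]
        refine Finset.sum_congr rfl fun s _ => Finset.sum_congr rfl fun a _ => ?_
        congr 1
        exact Finset.sum_congr rfl fun b _ => by ring }
  refine ⟨D, fun θ' => ?_⟩
  have hlog : ∀ (φ : S n → A n → ℝ) s a, Real.log (softmaxPol φ s a)
      = φ s a - Real.log (∑ b, Real.exp (φ s b)) := by
    intro φ s a
    unfold softmaxPol
    rw [Real.log_div (Real.exp_pos _).ne' (auxSm_den_pos (φ s)).ne', Real.log_exp]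
  have hs : ∀ s : S n, |Real.log (∑ b, Real.exp (θ' n s b)) - Real.log (∑ b, Real.exp (θ n s b))
      - ∑ b, auxSm (θ n s) b * (θ' - θ) n s b| ≤ ∑ b, (θ' - θ) n s b ^ 2 := by
    intro s
    have := auxSm_lse (θ n s) (fun b => (θ' - θ) n s b) (Real.sqrt (∑ b, (θ' - θ) n s b ^ 2))
      (fun a => Real.abs_le_sqrt (Finset.single_le_sum (f := fun a => ((θ' - θ) n s a) ^ 2)
        (fun a _ => sq_nonneg _) (Finset.mem_univ a)))
    rw [Real.sq_sqrt (Finset.sum_nonneg fun _ _ => sq_nonneg _)] at this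
    simpa using this
  have e : (∑ sn, ∑ an, Real.log (softmaxPol (θ' n) sn an))
        - (∑ sn, ∑ an, Real.log (softmaxPol (θ n) sn an)) - D (θ' - θ)
      = ∑ s : S n, ∑ a : A n, -(Real.log (∑ b, Real.exp (θ' n s b))
        - Real.log (∑ b, Real.exp (θ n s b)) - ∑ b, auxSm (θ n s) b * (θ' - θ) n s b) := by
    simp only [D, LinearMap.coe_mk, AddHom.coe_mk, hlog, ← Finset.sum_sub_distrib]
    refine Finset.sum_congr rfl fun s _ => Finset.sum_congr rfl fun a _ => ?_
    simp only [Pi.sub_apply]; ring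
  rw [e]
  refine (Finset.abs_sum_le_sum_abs _ _).trans ?_
  calc _ ≤ ∑ s : S n, (Fintype.card (A n) : ℝ) * ∑ b, (θ' - θ) n s b ^ 2 := by
        refine Finset.sum_le_sum fun s _ => ?_
        rw [Finset.sum_const, nsmul_eq_mul, abs_mul, abs_neg, Finset.card_univ, Nat.abs_cast]
        exact mul_le_mul_of_nonneg_left (hs s) (Nat.cast_nonneg _)
    _ ≤ _ := by
        rw [← Finset.mul_sum]
        refine mul_le_mul_of_nonneg_left ?_ (Nat.cast_nonneg _)
        exact Finset.single_le_sum (f := fun n => ∑ s, ∑ a, ((θ' - θ) n s a) ^ 2)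
          (fun n _ => Finset.sum_nonneg fun s _ => Finset.sum_nonneg fun a _ => sq_nonneg _)
          (Finset.mem_univ n)

end multi

/-- Smoothness of the entropy-regularized objective
`L_λ(θ) = V^{π_θ}(μ) + Σ_n (λ/(|S_n||A_n|)) Σ_{s_n,a_n} log π_{θ_n}(a_n|s_n)`:
for all `θ, θ'`,
`|L_λ(θ) − L_λ(θ') − ⟨∇L_λ(θ), θ−θ'⟩| ≤ (24N²/(1−γ)³ + Σ_n λ/|S_n|)‖θ−θ'‖₂²`. -/
theorem regularized_objective_smoothness
    {N : ℕ} (hN : 1 ≤ N)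
    {S A : Fin N → Type*}
    [∀ n, Fintype (S n)] [∀ n, Nonempty (S n)]
    [∀ n, Fintype (A n)] [∀ n, Nonempty (A n)]
    (Nbr : Fin N → Finset (Fin N)) (hNbr : ∀ n, n ∈ Nbr n)
    (r : Fin N → (∀ k, S k) → (∀ k, A k) → ℝ)
    (hr0 : ∀ n s a, 0 ≤ r n s a) (hr1 : ∀ n s a, r n s a ≤ 1)
    (hrloc : ∀ n (s s' : ∀ k, S k) (a a' : ∀ k, A k),
      (∀ k ∈ Nbr n, s k = s' k) → (∀ k ∈ Nbr n, a k = a' k) → r n s a = r n s' a')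
    (P : ∀ n, S n → A n → S n → ℝ)
    (hP0 : ∀ n sn an s'n, 0 ≤ P n sn an s'n)
    (hP1 : ∀ n sn an, ∑ s'n, P n sn an s'n = 1)
    (γ : ℝ) (hγ0 : 0 < γ) (hγ1 : γ < 1)
    (Rg : (∀ k, S k) → (∀ k, A k) → ℝ)
    (hRg : Rg = fun s a => (N : ℝ)⁻¹ * ∑ m, r m s a)
    (μ : (∀ k, S k) → ℝ) (hμ0 : ∀ s, 0 ≤ μ s) (hμ1 : ∑ s, μ s = 1)
    (lam : ℝ) (hlam : 0 < lam)
    (Lobj : (∀ n, S n → A n → ℝ) → ℝ)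
    (hLobj : Lobj = fun θ => valueD γ (gKernel P) (gPolicy θ) Rg μ +
      ∑ n, (lam / ((Fintype.card (S n) : ℝ) * (Fintype.card (A n) : ℝ))) *
        ∑ sn, ∑ an, Real.log (softmaxPol (θ n) sn an))
    (θ θ' : ∀ n, S n → A n → ℝ) :
    DifferentiableAt ℝ Lobj θ ∧
    |Lobj θ - Lobj θ' - fderiv ℝ Lobj θ (θ - θ')|
      ≤ (24 * (N : ℝ) ^ 2 / (1 - γ) ^ 3 + ∑ n, lam / (Fintype.card (S n) : ℝ)) *
          (eucNorm (θ - θ')) ^ 2 := by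
  have hNpos : (0 : ℝ) < N := by exact_mod_cast hN
  have hg : 0 < 1 - γ := by linarith
  have hR : ∀ s a, |Rg s a| ≤ 1 := by
    intro s a
    rw [hRg]
    have h0 : 0 ≤ ∑ m, r m s a := Finset.sum_nonneg fun m _ => hr0 m s a
    have h1 : ∑ m, r m s a ≤ N := by
      calc ∑ m, r m s a ≤ ∑ _m : Fin N, (1 : ℝ) := Finset.sum_le_sum fun m _ => hr1 m s a
        _ = N := by simp
    rw [abs_of_nonneg (mul_nonneg (inv_nonneg.mpr hNpos.le) h0), inv_mul_le_iff₀ hNpos, mul_one]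
    exact h1
  have hpol0 : ∀ (φ : ∀ n, S n → A n → ℝ) s a, 0 ≤ gPolicy φ s a := fun φ s a => by
    rw [aux_gPolicy]; exact auxSm_nonneg _ _
  have hpol1 : ∀ (φ : ∀ n, S n → A n → ℝ) s, ∑ a, gPolicy φ s a = 1 := fun φ s => by
    simp only [aux_gPolicy]; exact auxSm_sum _
  obtain ⟨D, hD⟩ := aux_value_remainder γ hγ0 hγ1 (gKernel P)
    (fun s a s' => Finset.prod_nonneg fun n _ => hP0 n _ _ _) (aux_gKernel_sum P hP1) Rg hR
    μ hμ0 hμ1 (gPolicy θ) (hpol0 θ) (hpol1 θ)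
  choose Dn hDn using aux_reg_remainder (S := S) (A := A) θ
  let q : (∀ n, S n → A n → ℝ) →ₗ[ℝ] ((∀ n, S n) → (∀ n, A n) → ℝ) :=
    { toFun := fun v s a => gPolicy θ s a *
        ((∑ n, v n (s n) (a n)) - ∑ b, gPolicy θ s b * ∑ n, v n (s n) (b n))
      map_add' := fun v w => by
        funext s a
        simp only [Pi.add_apply, Finset.sum_add_distrib, mul_add]; ring
      map_smul' := fun c v => by
        funext s a
        simp only [Pi.smul_apply, smul_eq_mul, RingHom.id_apply, ← Finset.mul_sum,
          mul_left_comm _ c]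
        ring }
  have hval : ∀ θ₁, |valueD γ (gKernel P) (gPolicy θ₁) Rg μ
      - valueD γ (gKernel P) (gPolicy θ) Rg μ - D (q (θ₁ - θ))|
      ≤ 24 * (N : ℝ) ^ 2 / (1 - γ) ^ 3 * sqNorm (θ₁ - θ) := by
    intro θ₁
    have hB : 0 ≤ (N : ℝ) * eucNorm (θ₁ - θ) := mul_nonneg hNpos.le (Real.sqrt_nonneg _)
    have hw : ∀ (s : ∀ n, S n) (a : ∀ n, A n), |∑ n, (θ₁ - θ) n (s n) (a n)|
        ≤ (N : ℝ) * eucNorm (θ₁ - θ) := by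
      intro s a
      calc _ ≤ ∑ n, |(θ₁ - θ) n (s n) (a n)| := Finset.abs_sum_le_sum_abs _ _
        _ ≤ ∑ _n : Fin N, eucNorm (θ₁ - θ) := Finset.sum_le_sum fun n _ => aux_entry_le _ _ _ _
        _ = _ := by simp
    have hs1 : ∀ s : ∀ n, S n, (fun b : ∀ n, A n => ∑ n, θ₁ n (s n) (b n))
        = fun b => (∑ n, θ n (s n) (b n)) + ∑ n, (θ₁ - θ) n (s n) (b n) := by
      intro s; funext b
      rw [← Finset.sum_add_distrib]
      exact Finset.sum_congr rfl fun n _ => by simp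
    have := hD (gPolicy θ₁) (hpol0 θ₁) (hpol1 θ₁) (q (θ₁ - θ)) _ hB
      (fun s => by
        simp only [aux_gPolicy, hs1]
        exact auxSm_first _ _ _ hB (hw s))
      (fun s => by
        simp only [q, LinearMap.coe_mk, AddHom.coe_mk, aux_gPolicy, hs1]
        exact auxSm_second _ _ _ hB (hw s))
    refine this.trans ?_
    rw [mul_pow, aux_eucNorm_sq, div_mul_eq_mul_div]
    apply div_le_div_of_nonneg_right _ (by positivity)
    nlinarith [mul_nonneg (sq_nonneg (N : ℝ)) (aux_sqNorm_nonneg (θ₁ - θ))]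
  let Dtot : (∀ n, S n → A n → ℝ) →ₗ[ℝ] ℝ := D ∘ₗ q +
    ∑ n, (lam / ((Fintype.card (S n) : ℝ) * (Fintype.card (A n) : ℝ))) • Dn n
  have hC : 0 ≤ 24 * (N : ℝ) ^ 2 / (1 - γ) ^ 3 + ∑ n, lam / (Fintype.card (S n) : ℝ) := by
    have : 0 ≤ ∑ n, lam / (Fintype.card (S n) : ℝ) := Finset.sum_nonneg fun n _ => by positivity
    positivity
  have hrem : ∀ θ₁, |Lobj θ₁ - Lobj θ - Dtot (θ₁ - θ)|
      ≤ (24 * (N : ℝ) ^ 2 / (1 - γ) ^ 3 + ∑ n, lam / (Fintype.card (S n) : ℝ))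
        * sqNorm (θ₁ - θ) := by
    intro θ₁
    have e : Lobj θ₁ - Lobj θ - Dtot (θ₁ - θ) =
        (valueD γ (gKernel P) (gPolicy θ₁) Rg μ
          - valueD γ (gKernel P) (gPolicy θ) Rg μ - D (q (θ₁ - θ))) +
        ∑ n, (lam / ((Fintype.card (S n) : ℝ) * (Fintype.card (A n) : ℝ))) *
          ((∑ sn, ∑ an, Real.log (softmaxPol (θ₁ n) sn an))
        - (∑ sn, ∑ an, Real.log (softmaxPol (θ n) sn an)) - Dn n (θ₁ - θ)) := by
      rw [hLobj]
      simp only [Dtot, LinearMap.add_apply, LinearMap.sum_apply, LinearMap.smul_apply,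
        LinearMap.comp_apply, smul_eq_mul, mul_sub, Finset.sum_sub_distrib]
      ring
    rw [e, add_mul]
    refine (abs_add_le _ _).trans (add_le_add (hval θ₁) ?_)
    refine (Finset.abs_sum_le_sum_abs _ _).trans ?_
    rw [Finset.sum_mul]
    refine Finset.sum_le_sum fun n _ => ?_
    have hA : (0 : ℝ) < Fintype.card (A n) := by exact_mod_cast Fintype.card_pos
    have hS : (0 : ℝ) < Fintype.card (S n) := by exact_mod_cast Fintype.card_pos
    rw [abs_mul, abs_of_pos (by positivity)]
    refine (mul_le_mul_of_nonneg_left (hDn n θ₁) (by positivity)).trans (le_of_eq ?_)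
    field_simp
  have hfd := aux_deriv_of_remainder Lobj θ Dtot _ hC hrem
  refine ⟨hfd.differentiableAt, ?_⟩
  rw [hfd.fderiv, aux_eucNorm_sq]
  have h1 := hrem θ'
  have h2 : sqNorm (θ - θ') = sqNorm (θ' - θ) := by
    unfold sqNorm
    refine Finset.sum_congr rfl fun n _ => Finset.sum_congr rfl fun s _ =>
      Finset.sum_congr rfl fun a _ => ?_
    simp only [Pi.sub_apply]; ring
  rw [h2]
  refine le_trans (le_of_eq ?_) h1
  rw [← abs_neg, ← neg_sub θ' θ]
  simp only [LinearMap.coe_toContinuousLinearMap', map_neg]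
  congr 1; ring
end
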